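/- arXiv:2109.01623 — 4 statements merged into one kernel-verified Lean document; each statement's English description precedes it below -/
import Mathlib

section
/- A feasible point x̄ of the MPCC is linearized B-stationary if and only if it is A_α-stationary for every α ∈ {0,1}^p. -/
/-!
The linearized cone is the union over `α ∈ {0,1}^p` of polyhedral branch cones: for a biactive
index `i`, the branch `α i = 0` imposes `⟪∇H i, d⟫ = 0 ≤ ⟪∇G i, d⟫`, and the branch `α i = 1`
imposes the same with `G` and `H` exchanged. The vector `-∇f` is polar to a union iff it is polar
to each piece, and by Farkas' lemma polarity to the branch `α` is exactly the existence of
`A_α`-multipliers.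

Farkas' lemma for finitely many vectors (`farkas_finset`) is proved by Bartl's algebraic induction
on the number of inequalities, which avoids showing that finitely generated cones are closed.
`farkas_mixed` is the version with both inequality and equality constraints.
-/

open Set Filter RealInnerProductSpace

noncomputable section

abbrev Rn (n : ℕ) := EuclideanSpace ℝ (Fin n)

/-- The tangent cone (Bouligand) to a set `F` at a point `x`. -/
def tangentCone' {n : ℕ} (F : Set (Rn n)) (x : Rn n) : Set (Rn n) :=
  {d | ∃ (xk : ℕ → Rn n) (tk : ℕ → ℝ),
    (∀ k, xk k ∈ F) ∧ (∀ k, 0 < tk k) ∧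
    Tendsto xk atTop (nhds x) ∧ Tendsto tk atTop (nhds 0) ∧
    Tendsto (fun k => (tk k)⁻¹ • (xk k - x)) atTop (nhds d)}

/-- The polar cone of a set. -/
def polarCone {n : ℕ} (C : Set (Rn n)) : Set (Rn n) :=
  {d | ∀ y ∈ C, ⟪d, y⟫ ≤ 0}

/-- α ∈ {0,1}^p -/
def IsBinaryVec {p : ℕ} (α : Fin p → ℝ) : Prop := ∀ i, α i = 0 ∨ α i = 1

/-- d ∈ [0,1]^p -/
def IsUnitIntervalVec {p : ℕ} (d : Fin p → ℝ) : Prop := ∀ i, d i ∈ Set.Icc (0:ℝ) 1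

variable {n l m p : ℕ}

/-- The feasible set of the MPCC. -/
def MpccFeasible (g : Fin l → Rn n → ℝ) (h : Fin m → Rn n → ℝ)
    (G H : Fin p → Rn n → ℝ) : Set (Rn n) :=
  {x | (∀ i, g i x ≤ 0) ∧ (∀ i, h i x = 0) ∧ (∀ i, 0 ≤ G i x) ∧ (∀ i, 0 ≤ H i x) ∧
    ∑ i, G i x * H i x = 0}

/-- The MPCC-linearized tangent cone at xb. -/
def MpccLinCone (g : Fin l → Rn n → ℝ) (h : Fin m → Rn n → ℝ)
    (G H : Fin p → Rn n → ℝ) (xb : Rn n) : Set (Rn n) :=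
  {d | (∀ i, g i xb = 0 → ⟪gradient (g i) xb, d⟫ ≤ 0) ∧
    (∀ i, ⟪gradient (h i) xb, d⟫ = 0) ∧
    (∀ i, G i xb = 0 → 0 < H i xb → ⟪gradient (G i) xb, d⟫ = 0) ∧
    (∀ i, 0 < G i xb → H i xb = 0 → ⟪gradient (H i) xb, d⟫ = 0) ∧
    (∀ i, G i xb = 0 → H i xb = 0 →
      0 ≤ ⟪gradient (G i) xb, d⟫ ∧ 0 ≤ ⟪gradient (H i) xb, d⟫ ∧
      ⟪gradient (G i) xb, d⟫ * ⟪gradient (H i) xb, d⟫ = 0)}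

/-- The weak stationarity system of the MPCC for given multipliers. -/
def MpccWeakMult (f : Rn n → ℝ) (g : Fin l → Rn n → ℝ) (h : Fin m → Rn n → ℝ)
    (G H : Fin p → Rn n → ℝ) (xb : Rn n)
    (lam : Fin l → ℝ) (eta : Fin m → ℝ) (mu nu : Fin p → ℝ) : Prop :=
  gradient f xb + ∑ i, lam i • gradient (g i) xb + ∑ i, eta i • gradient (h i) xb
    - ∑ i, mu i • gradient (G i) xb - ∑ i, nu i • gradient (H i) xb = 0 ∧
  (∀ i, g i xb = 0 → 0 ≤ lam i) ∧ (∀ i, g i xb ≠ 0 → lam i = 0) ∧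
  (∀ i, 0 < G i xb → H i xb = 0 → mu i = 0) ∧
  (∀ i, G i xb = 0 → 0 < H i xb → nu i = 0)

/-- A_α-stationarity for the MPCC. -/
def MpccAStat (f : Rn n → ℝ) (g : Fin l → Rn n → ℝ) (h : Fin m → Rn n → ℝ)
    (G H : Fin p → Rn n → ℝ) (xb : Rn n) (α : Fin p → ℝ) : Prop :=
  ∃ lam eta mu nu, MpccWeakMult f g h G H xb lam eta mu nu ∧
    (∀ i, G i xb = 0 → H i xb = 0 → α i = 0 → 0 ≤ mu i) ∧
    (∀ i, G i xb = 0 → H i xb = 0 → α i = 1 → 0 ≤ nu i)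

/-- P_α-stationarity for the MPCC. -/
def MpccPStat (f : Rn n → ℝ) (g : Fin l → Rn n → ℝ) (h : Fin m → Rn n → ℝ)
    (G H : Fin p → Rn n → ℝ) (xb : Rn n) (α : Fin p → ℝ) : Prop :=
  ∃ lam eta mu nu, MpccWeakMult f g h G H xb lam eta mu nu ∧
    (∀ i, G i xb = 0 → H i xb = 0 → α i = 0 → (0 ≤ mu i ∧ 0 ≤ nu i) ∨ mu i = 0) ∧
    (∀ i, G i xb = 0 → H i xb = 0 → α i = 1 → (0 ≤ mu i ∧ 0 ≤ nu i) ∨ nu i = 0)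

/-- C_d-stationarity for the MPCC. -/
def MpccCStat (f : Rn n → ℝ) (g : Fin l → Rn n → ℝ) (h : Fin m → Rn n → ℝ)
    (G H : Fin p → Rn n → ℝ) (xb : Rn n) (d : Fin p → ℝ) : Prop :=
  ∃ lam eta mu nu, MpccWeakMult f g h G H xb lam eta mu nu ∧
    (∀ i, G i xb = 0 → H i xb = 0 →
      (0 ≤ mu i ∧ 0 ≤ nu i) ∨ (1 - d i) * mu i = d i * nu i)

/-- M-stationarity for the MPCC. -/
def MpccMStat (f : Rn n → ℝ) (g : Fin l → Rn n → ℝ) (h : Fin m → Rn n → ℝ)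
    (G H : Fin p → Rn n → ℝ) (xb : Rn n) : Prop :=
  ∃ lam eta mu nu, MpccWeakMult f g h G H xb lam eta mu nu ∧
    (∀ i, G i xb = 0 → H i xb = 0 → (0 ≤ mu i ∧ 0 ≤ nu i) ∨ mu i * nu i = 0)

/-- The standard linearization cone of the branch problem NLP(α) at xb. -/
def MpccNlpLinCone (g : Fin l → Rn n → ℝ) (h : Fin m → Rn n → ℝ)
    (G H : Fin p → Rn n → ℝ) (xb : Rn n) (α : Fin p → ℝ) : Set (Rn n) :=
  {d | (∀ i, g i xb = 0 → ⟪gradient (g i) xb, d⟫ ≤ 0) ∧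
    (∀ i, ⟪gradient (h i) xb, d⟫ = 0) ∧
    (∀ i, 0 < G i xb → H i xb = 0 → ⟪gradient (H i) xb, d⟫ = 0) ∧
    (∀ i, G i xb = 0 → H i xb = 0 → α i = 0 →
      ⟪gradient (H i) xb, d⟫ = 0 ∧ 0 ≤ ⟪gradient (G i) xb, d⟫) ∧
    (∀ i, G i xb = 0 → 0 < H i xb → ⟪gradient (G i) xb, d⟫ = 0) ∧
    (∀ i, G i xb = 0 → H i xb = 0 → α i = 1 →
      ⟪gradient (G i) xb, d⟫ = 0 ∧ 0 ≤ ⟪gradient (H i) xb, d⟫)}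

/-- Farkas' lemma: if `⟪b, x⟫ ≤ 0` whenever all `⟪a i, x⟫ ≤ 0`, then `b` is a nonnegative combination
of the `a i`. -/
theorem farkas_finset {E ι : Type*} [NormedAddCommGroup E] [InnerProductSpace ℝ E]
    (s : Finset ι) : ∀ (a : ι → E) (b : E),
    (∀ x : E, (∀ i ∈ s, ⟪a i, x⟫ ≤ 0) → ⟪b, x⟫ ≤ 0) →
    ∃ c : ι → ℝ, (∀ i, 0 ≤ c i) ∧ b = ∑ i ∈ s, c i • a i := by
  classical
  induction s using Finset.induction_on with
  | empty =>
    intro a b hb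
    refine ⟨0, fun _ => le_rfl, ?_⟩
    have := hb b (by simp)
    simpa using inner_self_eq_zero.mp (le_antisymm this real_inner_self_nonneg)
  | insert k s hk ih =>
    intro a b hb
    by_cases hs : ∀ x : E, (∀ i ∈ s, ⟪a i, x⟫ ≤ 0) → ⟪b, x⟫ ≤ 0
    · -- The `k`-th constraint is redundant: give it the coefficient zero.
      obtain ⟨c, hc, hbc⟩ := ih a b hs
      refine ⟨Function.update c k 0, fun i => ?_, ?_⟩
      · by_cases hik : i = k
        · subst hik; simp
        · simpa [hik] using hc i
      · rw [Finset.sum_insert hk, hbc]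
        simp only [Function.update_self, zero_smul, zero_add]
        refine Finset.sum_congr rfl fun i hi => ?_
        rw [Function.update_of_ne (ne_of_mem_of_not_mem hi hk)]
    · push Not at hs
      obtain ⟨z, hz, hbz⟩ := hs
      have hkz : 0 < ⟪a k, z⟫ := by
        by_contra hcon
        refine absurd (hb z fun i hi => ?_) (not_le.mpr hbz)
        rcases Finset.mem_insert.mp hi with rfl | hi
        · exact not_lt.mp hcon
        · exact hz i hi
      set t := ⟪a k, z⟫ with ht
      -- Pass to the functionals precomposed with the projection `x ↦ x - (⟪a k, x⟫ / t) • z`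
      -- onto the hyperplane orthogonal to `a k`; there the `k`-th constraint is automatic.
      obtain ⟨c, hc, hbc⟩ := ih (fun i => a i - (⟪a i, z⟫ / t) • a k) (b - (⟪b, z⟫ / t) • a k) (by
        intro x hx
        have key : ∀ v : E, ⟪v - (⟪v, z⟫ / t) • a k, x⟫ = ⟪v, x - (⟪a k, x⟫ / t) • z⟫ := by
          intro v
          rw [inner_sub_left, inner_sub_right, real_inner_smul_left, real_inner_smul_right]
          ring
        rw [key]
        refine hb _ fun i hi => ?_
        rcases Finset.mem_insert.mp hi with rfl | hi
        · rw [inner_sub_right, real_inner_smul_right, ← ht]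
          field_simp
          simp
        · rw [← key]; exact hx i hi)
      refine ⟨Function.update c k (⟪b, z⟫ / t - ∑ i ∈ s, c i * (⟪a i, z⟫ / t)), fun i => ?_, ?_⟩
      · by_cases hik : i = k
        · subst hik
          rw [Function.update_self]
          have h1 : ∑ i ∈ s, c i * (⟪a i, z⟫ / t) ≤ 0 :=
            Finset.sum_nonpos fun i hi => mul_nonpos_of_nonneg_of_nonpos (hc i)
              (div_nonpos_of_nonpos_of_nonneg (hz i hi) hkz.le)
          have h2 : 0 < ⟪b, z⟫ / t := div_pos hbz hkz
          linarith
        · simpa [hik] using hc i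
      · rw [Finset.sum_insert hk, Function.update_self]
        have h1 : ∑ i ∈ s, Function.update c k
            (⟪b, z⟫ / t - ∑ i ∈ s, c i * (⟪a i, z⟫ / t)) i • a i = ∑ i ∈ s, c i • a i :=
          Finset.sum_congr rfl fun i hi => by
            rw [Function.update_of_ne (ne_of_mem_of_not_mem hi hk)]
        rw [h1, sub_smul, Finset.sum_smul]
        simp only [smul_sub, Finset.sum_sub_distrib, smul_smul] at hbc
        rw [sub_eq_iff_eq_add] at hbc
        refine hbc.trans ?_
        abel

/-- Farkas' lemma with inequality constraints on the indices satisfying `N` and equality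
constraints on those satisfying `F`; an index satisfying neither imposes nothing and gets a zero
multiplier. -/
theorem farkas_mixed {E ι : Type*} [NormedAddCommGroup E] [InnerProductSpace ℝ E] [Fintype ι]
    (N F : ι → Prop) (a : ι → E) (b : E)
    (hb : ∀ x : E, (∀ i, N i → ⟪a i, x⟫ ≤ 0) → (∀ i, F i → ⟪a i, x⟫ = 0) → ⟪b, x⟫ ≤ 0) :
    ∃ c : ι → ℝ, (∀ i, ¬ F i → 0 ≤ c i) ∧ (∀ i, ¬ N i → ¬ F i → c i = 0) ∧
      b = ∑ i, c i • a i := by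
  classical
  -- An equality is a pair of opposite inequalities.
  obtain ⟨c, hc, hbc⟩ := farkas_finset (Finset.univ : Finset (ι ⊕ ι))
    (Sum.elim (fun i => if N i ∨ F i then a i else 0) (fun i => if F i then -a i else 0)) b (by
      intro x hx
      have hF : ∀ i, F i → ⟪a i, x⟫ = 0 := by
        intro i hi
        have h1 := hx (Sum.inl i) (Finset.mem_univ _)
        have h2 := hx (Sum.inr i) (Finset.mem_univ _)
        simp [hi] at h1 h2
        linarith
      refine hb x (fun i hi => ?_) hF
      have h1 := hx (Sum.inl i) (Finset.mem_univ _)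
      simpa [hi] using h1)
  refine ⟨fun i => (if N i ∨ F i then c (Sum.inl i) else 0) - (if F i then c (Sum.inr i) else 0),
    fun i hi => ?_, fun i h1 h2 => by simp [h1, h2], ?_⟩
  · simp only [hi, or_false, if_false, sub_zero]
    split_ifs
    · exact hc _
    · exact le_rfl
  · rw [hbc, Fintype.sum_sum_type, ← Finset.sum_add_distrib]
    refine Finset.sum_congr rfl fun i _ => ?_
    by_cases h1 : N i <;> by_cases h2 : F i <;> simp [h1, h2, sub_smul, ← sub_eq_add_neg]

theorem MpccFeasible.mul_eq_zero {n l m p : ℕ} {g : Fin l → Rn n → ℝ}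
    {h : Fin m → Rn n → ℝ} {G H : Fin p → Rn n → ℝ} {xb : Rn n}
    (hfeas : xb ∈ MpccFeasible g h G H) (i : Fin p) : G i xb = 0 ∨ H i xb = 0 := by
  obtain ⟨-, -, hG, hH, hGH⟩ := hfeas
  exact _root_.mul_eq_zero.mp ((Finset.sum_eq_zero_iff_of_nonneg
    (fun i _ => mul_nonneg (hG i) (hH i))).mp hGH i (Finset.mem_univ i))

/-- Farkas' lemma on the branch cone of `α`: `A_α`-multipliers exist as soon as `-∇f` is polar to
that cone. -/
theorem MpccAStat.of_mem_polarCone {n l m p : ℕ} {f : Rn n → ℝ} {g : Fin l → Rn n → ℝ}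
    {h : Fin m → Rn n → ℝ} {G H : Fin p → Rn n → ℝ} {xb : Rn n} {α : Fin p → ℝ}
    (hB : -gradient f xb ∈ polarCone (MpccNlpLinCone g h G H xb α)) :
    MpccAStat f g h G H xb α := by
  obtain ⟨c, hc, hc0, hsum⟩ := farkas_mixed (ι := Fin l ⊕ Fin m ⊕ Fin p ⊕ Fin p)
    (Sum.elim (fun i => g i xb = 0) (Sum.elim (fun _ => False)
      (Sum.elim (fun i => G i xb = 0 ∧ H i xb = 0 ∧ α i = 0)
        (fun i => G i xb = 0 ∧ H i xb = 0 ∧ α i = 1))))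
    (Sum.elim (fun _ => False) (Sum.elim (fun _ => True)
      (Sum.elim (fun i => G i xb = 0 ∧ (0 < H i xb ∨ H i xb = 0 ∧ α i = 1))
        (fun i => H i xb = 0 ∧ (0 < G i xb ∨ G i xb = 0 ∧ α i = 0)))))
    (Sum.elim (fun i => gradient (g i) xb) (Sum.elim (fun i => gradient (h i) xb)
      (Sum.elim (fun i => -gradient (G i) xb) (fun i => -gradient (H i) xb))))
    (-gradient f xb) (by
      intro x hN hF
      simp only [Sum.forall, Sum.elim_inl, Sum.elim_inr, inner_neg_left, neg_nonpos,
        neg_eq_zero] at hN hF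
      obtain ⟨hNg, -, hNG, hNH⟩ := hN
      obtain ⟨-, hFh, hFG, hFH⟩ := hF
      exact hB x ⟨hNg, fun i => hFh i trivial,
        fun i h1 h2 => hFH i ⟨h2, .inl h1⟩,
        fun i h1 h2 h3 => ⟨hFH i ⟨h2, .inr ⟨h1, h3⟩⟩, hNG i ⟨h1, h2, h3⟩⟩,
        fun i h1 h2 => hFG i ⟨h1, .inl h2⟩,
        fun i h1 h2 h3 => ⟨hFG i ⟨h1, .inr ⟨h2, h3⟩⟩, hNH i ⟨h1, h2, h3⟩⟩⟩)
  simp only [Sum.forall, Sum.elim_inl, Sum.elim_inr] at hc hc0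
  obtain ⟨hcg, -, hcG, hcH⟩ := hc
  obtain ⟨hc0g, -, hc0G, hc0H⟩ := hc0
  refine ⟨fun i => c (.inl i), fun i => c (.inr (.inl i)), fun i => c (.inr (.inr (.inl i))),
    fun i => c (.inr (.inr (.inr i))), ⟨?_, fun i _ => hcg i id, fun i hi => hc0g i hi id,
      fun i h1 h2 => hc0G i (by grind) (by grind), fun i h1 h2 => hc0H i (by grind) (by grind)⟩,
    fun i h1 h2 h3 => hcG i (by grind), fun i h1 h2 h3 => hcH i (by grind)⟩
  simp only [Fintype.sum_sum_type, Sum.elim_inl, Sum.elim_inr, smul_neg,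
    Finset.sum_neg_distrib] at hsum
  rw [← neg_neg (gradient f xb), hsum]
  abel

/-- Each branch cone is contained in the linearized cone. -/
theorem MpccNlpLinCone.subset_linCone {n l m p : ℕ} {g : Fin l → Rn n → ℝ}
    {h : Fin m → Rn n → ℝ} {G H : Fin p → Rn n → ℝ} {xb : Rn n} {α : Fin p → ℝ}
    (hα : IsBinaryVec α) : MpccNlpLinCone g h G H xb α ⊆ MpccLinCone g h G H xb := by
  rintro d ⟨hg, hh, hH, h0, hG, h1⟩
  refine ⟨hg, hh, hG, hH, fun i hGi hHi => ?_⟩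
  rcases hα i with hi | hi
  · obtain ⟨e, e'⟩ := h0 i hGi hHi hi
    exact ⟨e', e.ge, by rw [e, mul_zero]⟩
  · obtain ⟨e, e'⟩ := h1 i hGi hHi hi
    exact ⟨e.ge, e', by rw [e, zero_mul]⟩

/-- The linearized cone is covered by the branch cones. -/
theorem MpccLinCone.exists_mem_nlpLinCone {n l m p : ℕ} {g : Fin l → Rn n → ℝ}
    {h : Fin m → Rn n → ℝ} {G H : Fin p → Rn n → ℝ} {xb d : Rn n}
    (hd : d ∈ MpccLinCone g h G H xb) :
    ∃ α : Fin p → ℝ, IsBinaryVec α ∧ d ∈ MpccNlpLinCone g h G H xb α := by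
  classical
  obtain ⟨hg, hh, hG, hH, h00⟩ := hd
  refine ⟨fun i => if ⟪gradient (H i) xb, d⟫ = 0 then 0 else 1,
    fun i => by beta_reduce; split_ifs <;> simp, hg, hh, hH, fun i h1 h2 h3 => ?_, hG,
    fun i h1 h2 h3 => ?_⟩
  · obtain ⟨e1, -, -⟩ := h00 i h1 h2
    exact ⟨by simpa using h3, e1⟩
  · obtain ⟨-, e2, e3⟩ := h00 i h1 h2
    exact ⟨(_root_.mul_eq_zero.mp e3).resolve_right (by simpa using h3), e2⟩

/-- `A_α`-multipliers certify that `-∇f` is polar to the branch cone of `α`. -/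
theorem MpccAStat.mem_polarCone {n l m p : ℕ} {f : Rn n → ℝ} {g : Fin l → Rn n → ℝ}
    {h : Fin m → Rn n → ℝ} {G H : Fin p → Rn n → ℝ} {xb : Rn n} {α : Fin p → ℝ}
    (hfeas : xb ∈ MpccFeasible g h G H) (hα : IsBinaryVec α) (hA : MpccAStat f g h G H xb α) :
    -gradient f xb ∈ polarCone (MpccNlpLinCone g h G H xb α) := by
  obtain ⟨lam, eta, mu, nu, ⟨hsum, hlam, hlam0, hmu, hnu⟩, hmu', hnu'⟩ := hA
  rintro d ⟨hdg, hdh, hdH, hd0, hdG, hd1⟩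
  have key := congrArg (fun v => ⟪v, d⟫) hsum
  simp only [inner_add_left, inner_sub_left, sum_inner, real_inner_smul_left,
    inner_zero_left] at key
  have h1 : ∑ i, lam i * ⟪gradient (g i) xb, d⟫ ≤ 0 := by
    refine Finset.sum_nonpos fun i _ => ?_
    by_cases hi : g i xb = 0
    · exact mul_nonpos_of_nonneg_of_nonpos (hlam i hi) (hdg i hi)
    · simp [hlam0 i hi]
  have h2 : ∑ i, eta i * ⟪gradient (h i) xb, d⟫ = 0 := by simp [hdh]
  have h3 : 0 ≤ ∑ i, (mu i * ⟪gradient (G i) xb, d⟫ + nu i * ⟪gradient (H i) xb, d⟫) := by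
    refine Finset.sum_nonneg fun i _ => ?_
    rcases (hfeas.2.2.1 i).eq_or_lt with hGi | hGi
    · rcases (hfeas.2.2.2.1 i).eq_or_lt with hHi | hHi
      · rcases hα i with hi | hi
        · obtain ⟨e, e'⟩ := hd0 i hGi.symm hHi.symm hi
          have := mul_nonneg (hmu' i hGi.symm hHi.symm hi) e'
          rw [e]; linarith
        · obtain ⟨e, e'⟩ := hd1 i hGi.symm hHi.symm hi
          have := mul_nonneg (hnu' i hGi.symm hHi.symm hi) e'
          rw [e]; linarith
      · simp [hdG i hGi.symm hHi, hnu i hGi.symm hHi]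
    · have hHi := (MpccFeasible.mul_eq_zero hfeas i).resolve_left hGi.ne'
      simp [hdH i hGi hHi, hmu i hGi hHi]
  rw [Finset.sum_add_distrib] at h3
  rw [inner_neg_left]
  linarith

/-- linearized B-stationarity ↔ A_α-stationarity for all α ∈ {0,1}^p. -/
theorem mpcc_linearized_BStat_iff_AStat_all {n l m p : ℕ} (f : Rn n → ℝ) (g : Fin l → Rn n → ℝ)
    (h : Fin m → Rn n → ℝ) (G H : Fin p → Rn n → ℝ) (xb : Rn n)
    (hf : Differentiable ℝ f) (hg : ∀ i, Differentiable ℝ (g i))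
    (hh : ∀ i, Differentiable ℝ (h i)) (hG : ∀ i, Differentiable ℝ (G i))
    (hH : ∀ i, Differentiable ℝ (H i))
    (hfeas : xb ∈ MpccFeasible g h G H) :
    -gradient f xb ∈ polarCone (MpccLinCone g h G H xb) ↔
      ∀ α : Fin p → ℝ, IsBinaryVec α → MpccAStat f g h G H xb α := by
  constructor
  · exact fun hB α hα => MpccAStat.of_mem_polarCone fun d hd =>
      hB d (MpccNlpLinCone.subset_linCone hα hd)
  · intro hA d hd
    obtain ⟨α, hα, hdα⟩ := MpccLinCone.exists_mem_nlpLinCone hd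
    exact MpccAStat.mem_polarCone hfeas hα (hA α hα) d hdα
end
end

section
/- Let p ∈ ℕ, let J ⊆ {1,…,p}, and let ψ : ℝ^p × ℝ^p → ℝ^p be a continuous function such that for all a, b ∈ ℝ^p and all i ∈ J: ψ_i(a,b) ≤ 0 whenever a_i ≥ 0, and ψ_i(a,b) ≥ 0 whenever b_i ≥ 0. For each α ∈ {0,1}^p let a point (μ^α, ν^α) ∈ A^α be given. Then there exists a point (μ̄, ν̄) in the convex hull of {(μ^α, ν^α) : α ∈ {0,1}^p} with ψ_i(μ̄, ν̄) = 0 for all i ∈ J. -/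
/-!
The points `w α` are interpolated multilinearly over the cube `[0, 1]^p`. On the face `t i = 0` only
the `α` with `α i = 0` carry weight, so the interpolated `μ i` is nonnegative and `ψ i ≤ 0`; on
`t i = 1` likewise `ψ i ≥ 0`. A common zero is then provided by the Poincaré–Miranda theorem
(`poincare_miranda`).

Poincaré–Miranda is proved by a discrete cohomological argument modulo 2. Label the vertices of the
grid `{0, …, n}^p`, `n` odd, by the signs `s i ∈ ZMod 2` of the components. For every unit cube and
every monotone path `y 0, …, y p` from its lowest to its highest corner, take the product over `i` of
the increments `s i (y i) + s i (y (i + 1))`; this is the cup product of the coboundaries of the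
`s i`, evaluated on the Kuhn triangulation. By a discrete Stokes formula (`stokes`), the total over
the grid does not change when `s i` is replaced by another labelling with the same values on the two
faces orthogonal to direction `i`. Replacing every `s i` by the `i`-th coordinate modulo 2 gives the
total `n ^ p = 1` (`sum_labels`). Hence some product is nonzero, and in that cube every component
changes sign. Letting `n → ∞`, compactness yields the zero.
-/

open Set

/-- The set A^α of multiplier pairs (μ, ν) with μ_i ≥ 0 for i ∈ J with α_i = 0
and ν_i ≥ 0 for i ∈ J with α_i = 1. -/
def Aset {p : ℕ} (J : Set (Fin p)) (α : Fin p → ℝ) :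
    Set ((Fin p → ℝ) × (Fin p → ℝ)) :=
  {w | (∀ i ∈ J, α i = 0 → 0 ≤ w.1 i) ∧ (∀ i ∈ J, α i = 1 → 0 ≤ w.2 i)}

/-! ### Lattice paths and cancellation of interior faces -/

/-- The `k`-th vertex of a monotone lattice path running from the corner `x` of a unit cube to the
opposite corner `x + (1, …, 1)`. The path is encoded by the permutation `ρ` telling when each
coordinate is increased: coordinate `c` goes up in step `ρ c`, i.e. between the vertices of index
`ρ c` and `ρ c + 1`. The paths of one cube are the simplices of its Kuhn triangulation. -/
def gridPath {p : ℕ} (x : Fin p → ℕ) (ρ : Equiv.Perm (Fin p)) (k : ℕ) : Fin p → ℕ :=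
  fun c => x c + if (ρ c : ℕ) < k then 1 else 0

/-- Interior faces cancel: modulo 2, a quantity that ignores the intermediate vertex `m + 1` sums to
zero over the paths of a cube, because exchanging the steps `m` and `m + 1` moves only that
vertex. -/
lemma sum_gridPath_eq_zero {p : ℕ} (x : Fin p → ℕ) (G : (ℕ → Fin p → ℕ) → ZMod 2)
    (m : ℕ) (hm : m + 1 < p)
    (hG : ∀ y y' : ℕ → Fin p → ℕ, (∀ k, k ≠ m + 1 → y k = y' k) → G y = G y') :
    ∑ ρ : Equiv.Perm (Fin p), G (gridPath x ρ) = 0 := by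
  have hne : (⟨m, by omega⟩ : Fin p) ≠ ⟨m + 1, hm⟩ := by simp [Fin.ext_iff]
  refine Finset.sum_involution
    (fun ρ _ => Equiv.swap (⟨m, by omega⟩ : Fin p) ⟨m + 1, hm⟩ * ρ) ?_ ?_ ?_ ?_
  · intro ρ _
    have : G (gridPath x ρ) =
        G (gridPath x (Equiv.swap (⟨m, by omega⟩ : Fin p) ⟨m + 1, hm⟩ * ρ)) := by
      apply hG
      intro k hk
      funext c
      simp only [gridPath, Equiv.Perm.mul_apply, Equiv.swap_apply_def, Fin.ext_iff]
      split_ifs <;> simp_all <;> omega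
    rw [← this, CharTwo.add_self_eq_zero]
  · intro ρ _ _ h
    exact hne (Equiv.swap_eq_one_iff.1 (mul_eq_right.1 h))
  · intros; simp
  · intro ρ _; simp [← mul_assoc]

/-- Summed over the paths of a cube, the product of the increments of `s 0, …, s (m - 1)` along the
first `m` steps may be taken along the steps `1, …, m` instead. The unused step travels from
position `m` to position `0`, one place at a time; each time the error is an interior face. -/
lemma left_move {p : ℕ} (x : Fin p → ℕ) (s : ℕ → (Fin p → ℕ) → ZMod 2) (m : ℕ) (hm : m < p) :
    ∀ R : (ℕ → Fin p → ℕ) → ZMod 2,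
    (∀ y y' : ℕ → Fin p → ℕ, (∀ k, m < k → y k = y' k) → R y = R y') →
    ∑ ρ : Equiv.Perm (Fin p), (∏ j ∈ Finset.range m,
        (s j (gridPath x ρ j) + s j (gridPath x ρ (j + 1)))) * R (gridPath x ρ) =
    ∑ ρ : Equiv.Perm (Fin p), (∏ j ∈ Finset.range m,
        (s j (gridPath x ρ (j + 1)) + s j (gridPath x ρ (j + 2)))) * R (gridPath x ρ) := by
  induction m with
  | zero => intro R _; simp
  | succ m ih =>
    intro R hR
    have h1 := sum_gridPath_eq_zero x
      (fun y => (∏ j ∈ Finset.range m, (s j (y j) + s j (y (j + 1)))) *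
        ((s m (y m) + s m (y (m + 2))) * R y)) m hm (by
        intro y y' h
        have e1 : ∀ j ∈ Finset.range m,
            s j (y j) + s j (y (j + 1)) = s j (y' j) + s j (y' (j + 1)) := by
          intro j hj
          have := Finset.mem_range.1 hj
          rw [h j (by omega), h (j + 1) (by omega)]
        rw [Finset.prod_congr rfl e1, h m (by omega), h (m + 2) (by omega),
          hR y y' (fun k hk => h k (by omega))])
    have h2 := ih (by omega) (fun y => (s m (y (m + 1)) + s m (y (m + 2))) * R y) (by
        intro y y' h
        rw [h (m + 1) (by omega), h (m + 2) (by omega), hR y y' (fun k hk => h k (by omega))])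
    simp only [Finset.prod_range_succ, mul_assoc]
    rw [← h2, ← sub_eq_zero, ← Finset.sum_sub_distrib, ← h1]
    refine Finset.sum_congr rfl fun ρ _ => ?_
    rw [← mul_sub, ← sub_mul]
    congr 2
    rw [CharTwo.sub_eq_add]
    linear_combination (CharTwo.add_self_eq_zero (s m (gridPath x ρ (m + 1))))

/-- Mirror image of `left_move`: the increments of `s (m + 1), …, s (p - 1)` may be taken one step
earlier, which moves the unused step from position `m` to the last position. Here `r` is the number
of these increments. -/
lemma right_move {p : ℕ} (x : Fin p → ℕ) (s : ℕ → (Fin p → ℕ) → ZMod 2) (r : ℕ) :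
    ∀ m : ℕ, m + 1 + r = p → ∀ R : (ℕ → Fin p → ℕ) → ZMod 2,
    (∀ y y' : ℕ → Fin p → ℕ, (∀ k, k ≤ m → y k = y' k) → R y = R y') →
    ∑ ρ : Equiv.Perm (Fin p), R (gridPath x ρ) * (∏ j ∈ Finset.Ico (m + 1) p,
        (s j (gridPath x ρ j) + s j (gridPath x ρ (j + 1)))) =
    ∑ ρ : Equiv.Perm (Fin p), R (gridPath x ρ) * (∏ j ∈ Finset.Ico (m + 1) p,
        (s j (gridPath x ρ (j - 1)) + s j (gridPath x ρ j))) := by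
  induction r with
  | zero => intro m hm R _; simp [show m + 1 = p by omega]
  | succ r ih =>
    intro m hm R hR
    have h1 := sum_gridPath_eq_zero x
      (fun y => R y * ((s (m + 1) (y m) + s (m + 1) (y (m + 2))) *
        (∏ j ∈ Finset.Ico (m + 1 + 1) p, (s j (y j) + s j (y (j + 1)))))) m (by omega) (by
        intro y y' h
        have e1 : ∀ j ∈ Finset.Ico (m + 1 + 1) p,
            s j (y j) + s j (y (j + 1)) = s j (y' j) + s j (y' (j + 1)) := by
          intro j hj
          have := Finset.mem_Ico.1 hj
          rw [h j (by omega), h (j + 1) (by omega)]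
        rw [Finset.prod_congr rfl e1, h m (by omega), h (m + 2) (by omega),
          hR y y' (fun k hk => h k (by omega))])
    have h2 := ih (m + 1) (by omega)
      (fun y => R y * (s (m + 1) (y m) + s (m + 1) (y (m + 1)))) (by
        intro y y' h
        rw [h (m + 1) (by omega), h m (by omega), hR y y' (fun k hk => h k (by omega))])
    simp only [Finset.prod_eq_prod_Ico_succ_bot (show m + 1 < p by omega)]
    simp only [mul_assoc] at h2
    simp only [Nat.add_sub_cancel]
    rw [← h2, ← sub_eq_zero, ← Finset.sum_sub_distrib, ← h1]
    refine Finset.sum_congr rfl fun ρ _ => ?_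
    rw [← mul_sub, ← sub_mul]
    congr 2
    rw [CharTwo.sub_eq_add]
    linear_combination (CharTwo.add_self_eq_zero (s (m + 1) (gridPath x ρ (m + 1))))

/-! ### The discrete Stokes formula -/

/-- Dropping the first vertex of a path leaves a path of the neighbouring cube, in the direction of
the first step, with its last vertex dropped. -/
lemma gridPath_shift {q : ℕ} (x : Fin (q + 1) → ℕ) (ρ : Equiv.Perm (Fin (q + 1))) (k : ℕ)
    (hk : k ≤ q) :
    gridPath x ρ (k + 1) =
      gridPath (x + Pi.single (ρ.symm 0) 1) ((finRotate (q + 1)).symm * ρ) k := by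
  funext c
  obtain ⟨a, rfl⟩ := ρ.symm.surjective c
  obtain ⟨b, rfl⟩ := (finRotate (q + 1)).surjective a
  simp only [gridPath, Equiv.apply_symm_apply, Equiv.Perm.mul_apply, Equiv.symm_apply_apply,
    Pi.add_apply, Pi.single_apply, EmbeddingLike.apply_eq_iff_eq]
  rcases eq_or_ne b (Fin.last q) with rfl | hb
  · simp [hk]
  · have h1 : ((finRotate (q + 1) b : Fin (q + 1)) : ℕ) = b + 1 := coe_finRotate_of_ne_last hb
    have h2 : finRotate (q + 1) b ≠ 0 := by
      intro h; rw [h] at h1; simp at h1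
    rw [h1, if_neg h2]
    simp only [add_lt_add_iff_right, add_zero]

/-- Telescoping in direction `c` for a function that vanishes on the two faces orthogonal to `c`. -/
lemma sum_box_shift {p : ℕ} (n : ℕ) (c : Fin p) (H : (Fin p → ℕ) → ZMod 2)
    (h0 : ∀ x, x c = 0 → H x = 0) (hn : ∀ x, x c = n → H x = 0) :
    ∑ x ∈ Fintype.piFinset (fun _ : Fin p => Finset.range n), H (x + Pi.single c 1) =
    ∑ x ∈ Fintype.piFinset (fun _ : Fin p => Finset.range n), H x := by
  refine Finset.sum_bij_ne_zero (fun x _ _ => x + Pi.single c 1) ?_ ?_ ?_ ?_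
  · intro x hx hne
    simp only [Fintype.mem_piFinset, Finset.mem_range] at hx ⊢
    intro j
    rcases eq_or_ne j c with rfl | hj
    · have := hx j
      have h : (x + Pi.single j 1 : Fin p → ℕ) j ≠ n := fun h => hne (hn _ h)
      simp at h ⊢; omega
    · simpa [hj] using hx j
  · intro x _ _ y _ _ h
    exact add_right_cancel h
  · intro x hx hne
    have hc : x c ≠ 0 := fun h => hne (h0 _ h)
    have he : (x - Pi.single c 1) + Pi.single c 1 = x := by
      funext j
      rcases eq_or_ne j c with rfl | hj
      · simp; omega
      · simp [hj]
    refine ⟨x - Pi.single c 1, ?_, by rwa [he], he⟩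
    simp only [Fintype.mem_piFinset, Finset.mem_range, Pi.sub_apply] at hx ⊢
    intro j
    exact lt_of_le_of_lt (Nat.sub_le _ _) (hx j)
  · intros; rfl

/-- The sum over the grid of the cup product of the increments of the `s j`, `j ≠ i`, and of `u` (in
place `i`) vanishes when `u` is zero on the two faces orthogonal to direction `i`. The cup product
is the coboundary of `C` below, so only the boundary of the grid contributes; on the faces orthogonal
to `c ≠ i` the increment of `s c` is zero, and on those orthogonal to `i` the function `u` is. -/
lemma stokes {p : ℕ} (n : ℕ) (s : ℕ → (Fin p → ℕ) → ZMod 2) (u : (Fin p → ℕ) → ZMod 2)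
    (i : Fin p)
    (hs0 : ∀ (j : Fin p) x, x j = 0 → s j x = 0) (hs1 : ∀ (j : Fin p) x, x j = n → s j x = 1)
    (hu0 : ∀ x, x i = 0 → u x = 0) (hu1 : ∀ x, x i = n → u x = 0) :
    ∑ x ∈ Fintype.piFinset (fun _ : Fin p => Finset.range n), ∑ ρ : Equiv.Perm (Fin p),
      (∏ j ∈ Finset.range i, (s j (gridPath x ρ j) + s j (gridPath x ρ (j + 1)))) *
      ((u (gridPath x ρ i) + u (gridPath x ρ (i + 1))) *
      ∏ j ∈ Finset.Ico (i + 1 : ℕ) p,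
        (s j (gridPath x ρ j) + s j (gridPath x ρ (j + 1)))) = 0 := by
  obtain ⟨q, rfl⟩ : ∃ q, p = q + 1 := ⟨p - 1, by have := i.2; omega⟩
  set C : (ℕ → Fin (q + 1) → ℕ) → ZMod 2 := fun y =>
    (∏ j ∈ Finset.range i, (s j (y j) + s j (y (j + 1)))) * (u (y i) *
      ∏ j ∈ Finset.Ico (i + 1 : ℕ) (q + 1), (s j (y (j - 1)) + s j (y j))) with hC
  have hCcongr : ∀ y y' : ℕ → Fin (q + 1) → ℕ, (∀ k ≤ q, y k = y' k) → C y = C y' := by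
    intro y y' h
    have hi := i.2
    have e1 : ∀ j ∈ Finset.range i,
        s j (y j) + s j (y (j + 1)) = s j (y' j) + s j (y' (j + 1)) := by
      intro j hj
      have := Finset.mem_range.1 hj
      rw [h j (by omega), h (j + 1) (by omega)]
    have e2 : ∀ j ∈ Finset.Ico (i + 1 : ℕ) (q + 1),
        s j (y (j - 1)) + s j (y j) = s j (y' (j - 1)) + s j (y' j) := by
      intro j hj
      have := Finset.mem_Ico.1 hj
      rw [h j (by omega), h (j - 1) (by omega)]
    simp only [hC]
    rw [Finset.prod_congr rfl e1, Finset.prod_congr rfl e2, h i (by omega)]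
  -- Within one cube all interior faces cancel. What remains is `C` on the paths without their last
  -- vertex, plus `C` on the paths without their first vertex, i.e. on paths of a neighbouring cube.
  have hcube : ∀ x : Fin (q + 1) → ℕ, ∑ ρ : Equiv.Perm (Fin (q + 1)),
      (∏ j ∈ Finset.range i, (s j (gridPath x ρ j) + s j (gridPath x ρ (j + 1)))) *
      ((u (gridPath x ρ i) + u (gridPath x ρ (i + 1))) *
      ∏ j ∈ Finset.Ico (i + 1 : ℕ) (q + 1),
        (s j (gridPath x ρ j) + s j (gridPath x ρ (j + 1)))) =
      ∑ ρ : Equiv.Perm (Fin (q + 1)), C (gridPath x ρ) +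
      ∑ ρ : Equiv.Perm (Fin (q + 1)), C (gridPath (x + Pi.single (Equiv.symm ρ (Fin.last q)) 1) ρ) := by
    intro x
    have hR := right_move x s (q - i) i (by have := i.2; omega)
      (fun y => (∏ j ∈ Finset.range i, (s j (y j) + s j (y (j + 1)))) * u (y i)) (by
        intro y y' h
        have e1 : ∀ j ∈ Finset.range i,
            s j (y j) + s j (y (j + 1)) = s j (y' j) + s j (y' (j + 1)) := by
          intro j hj
          have := Finset.mem_range.1 hj
          rw [h j (by omega), h (j + 1) (by omega)]
        rw [Finset.prod_congr rfl e1, h i le_rfl])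
    have hL := left_move x s i i.2
      (fun y => u (y (i + 1)) * ∏ j ∈ Finset.Ico (i + 1 : ℕ) (q + 1),
        (s j (y j) + s j (y (j + 1)))) (by
        intro y y' h
        have e1 : ∀ j ∈ Finset.Ico (i + 1 : ℕ) (q + 1),
            s j (y j) + s j (y (j + 1)) = s j (y' j) + s j (y' (j + 1)) := by
          intro j hj
          have := Finset.mem_Ico.1 hj
          rw [h j (by omega), h (j + 1) (by omega)]
        rw [Finset.prod_congr rfl e1, h (i + 1) (by omega)])
    simp only [add_mul, mul_add, Finset.sum_add_distrib]
    simp only [mul_assoc] at hR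
    rw [hR, hL]
    congr 1
    refine Eq.trans ?_ (Equiv.sum_comp (Equiv.mulLeft (finRotate (q + 1)).symm)
      (fun ρ : Equiv.Perm (Fin (q + 1)) =>
        C (gridPath (x + Pi.single (Equiv.symm ρ (Fin.last q)) 1) ρ)))
    refine Finset.sum_congr rfl fun ρ _ => ?_
    have hlast : Equiv.symm ((finRotate (q + 1)).symm * ρ) (Fin.last q) = ρ.symm 0 := by
      rw [Equiv.symm_apply_eq, Equiv.Perm.mul_apply, Equiv.apply_symm_apply, Equiv.eq_symm_apply]
      exact finRotate_last
    have e : C (fun k => gridPath x ρ (k + 1)) =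
        C (gridPath (x + Pi.single (ρ.symm 0) 1) ((finRotate (q + 1)).symm * ρ)) :=
      hCcongr _ _ fun k hk => gridPath_shift x ρ k hk
    simp only [Equiv.coe_mulLeft, hlast]
    rw [← e]
    simp only [hC]
    congr 2
    refine Finset.prod_congr rfl fun j hj => ?_
    have := Finset.mem_Ico.1 hj
    rw [show j - 1 + 1 = j by omega]
  rw [Finset.sum_congr rfl fun x _ => hcube x, Finset.sum_add_distrib]
  rw [Finset.sum_comm, Finset.sum_comm (s := Fintype.piFinset _), ← Finset.sum_add_distrib]
  refine Finset.sum_eq_zero fun ρ _ => ?_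
  -- The step `Fin.last q` is the one along `c = ρ⁻¹ (last)`, so all the vertices that `C` looks at
  -- have the same `c`-th coordinate as `x`.
  have hface : ∀ (v : ℕ), (v = 0 ∨ v = n) → ∀ x : Fin (q + 1) → ℕ,
      x (Equiv.symm ρ (Fin.last q)) = v → C (gridPath x ρ) = 0 := by
    intro v hv x hx
    set c := Equiv.symm ρ (Fin.last q) with hc
    have hρ : ρ c = Fin.last q := by simp [hc]
    have hy : ∀ k ≤ q, gridPath x ρ k c = v := by
      intro k hk
      simp [gridPath, hρ, hx, hk]
    have hd : ∀ k ≤ q, ∀ l ≤ q, s c (gridPath x ρ k) + s c (gridPath x ρ l) = 0 := by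
      intro k hk l hl
      rcases hv with rfl | rfl
      · rw [hs0 c _ (hy k hk), hs0 c _ (hy l hl), add_zero]
      · rw [hs1 c _ (hy k hk), hs1 c _ (hy l hl), CharTwo.add_self_eq_zero]
    have hi := i.2
    have hc' := c.2
    simp only [hC]
    rcases lt_trichotomy (c : ℕ) i with h | h | h
    · rw [Finset.prod_eq_zero (Finset.mem_range.2 h) (hd _ (by omega) _ (by omega)), zero_mul]
    · have hci : c = i := Fin.ext h
      have : u (gridPath x ρ i) = 0 := by
        have := hy i (by omega)
        rw [hci] at this
        rcases hv with rfl | rfl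
        · exact hu0 _ this
        · exact hu1 _ this
      rw [this, zero_mul, mul_zero]
    · rw [Finset.prod_eq_zero (Finset.mem_Ico.2 ⟨h, hc'⟩) (hd _ (by omega) _ (by omega)),
        mul_zero, mul_zero]
  rw [sum_box_shift n (Equiv.symm ρ (Fin.last q)) (fun x => C (gridPath x ρ))
    (hface 0 (Or.inl rfl)) (hface n (Or.inr rfl)), CharTwo.add_self_eq_zero]

/-! ### The total over the grid -/

/-- The total for the coordinate functions modulo 2: in each cube only the identity permutation
contributes, so the total is the number `n ^ p` of cubes, which is odd. -/
lemma sum_coord {p : ℕ} (n : ℕ) (hn : Odd n) (t : ℕ → (Fin p → ℕ) → ZMod 2)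
    (ht : ∀ (j : Fin p) x, t j x = x j) :
    ∑ x ∈ Fintype.piFinset (fun _ : Fin p => Finset.range n), ∑ ρ : Equiv.Perm (Fin p),
      ∏ j ∈ Finset.range p, (t j (gridPath x ρ j) + t j (gridPath x ρ (j + 1))) = 1 := by
  have h : ∀ (x : Fin p → ℕ) (ρ : Equiv.Perm (Fin p)),
      ∏ j ∈ Finset.range p, (t j (gridPath x ρ j) + t j (gridPath x ρ (j + 1))) =
      if ρ = 1 then 1 else 0 := by
    intro x ρ
    rw [Finset.prod_range]
    have : ∀ j : Fin p, t j (gridPath x ρ j) + t j (gridPath x ρ (j + 1)) =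
        if ρ j = j then 1 else 0 := by
      intro j
      rw [ht, ht]
      have h2 : (2 : ZMod 2) = 0 := rfl
      simp only [gridPath, Fin.ext_iff]
      push_cast
      split_ifs <;> first
        | omega
        | linear_combination (x j : ZMod 2) * h2
        | linear_combination (x j + 1 : ZMod 2) * h2
    simp only [this]
    rw [Finset.prod_ite_zero]
    simp [Equiv.ext_iff]
  have hn1 : (n : ZMod 2) = 1 := (ZMod.natCast_eq_one_iff_odd).2 hn
  simp [h, hn1]

/-- A combinatorial cubical lemma: the total is `1` for every labelling with the prescribed values on
the faces, since by `stokes` the labels can be replaced by the coordinates one index at a time. -/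
lemma sum_labels {p : ℕ} (n : ℕ) (hn : Odd n) (s : ℕ → (Fin p → ℕ) → ZMod 2)
    (hs0 : ∀ (j : Fin p) x, x j = 0 → s j x = 0)
    (hs1 : ∀ (j : Fin p) x, x j = n → s j x = 1) :
    ∑ x ∈ Fintype.piFinset (fun _ : Fin p => Finset.range n), ∑ ρ : Equiv.Perm (Fin p),
      ∏ j ∈ Finset.range p, (s j (gridPath x ρ j) + s j (gridPath x ρ (j + 1))) = 1 := by
  have hn1 : (n : ZMod 2) = 1 := (ZMod.natCast_eq_one_iff_odd).2 hn
  set t : ℕ → (Fin p → ℕ) → ZMod 2 := fun j x => if h : j < p then (x ⟨j, h⟩ : ZMod 2) else 0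
    with ht
  have htj : ∀ (j : Fin p) x, t j x = x j := fun j x => by simp [ht]
  -- `S m` uses the coordinate labels before index `m` and the given ones from `m` on
  set S : ℕ → ℕ → (Fin p → ℕ) → ZMod 2 := fun m j => if j < m then t j else s j with hS
  have hS0 : ∀ m (j : Fin p) x, x j = 0 → S m j x = 0 := by
    intro m j x hx
    simp only [hS]; split_ifs
    · simp [htj, hx]
    · exact hs0 j x hx
  have hS1 : ∀ m (j : Fin p) x, x j = n → S m j x = 1 := by
    intro m j x hx
    simp only [hS]; split_ifs
    · simp [htj, hx, hn1]
    · exact hs1 j x hx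
  have key : ∀ m ≤ p, ∑ x ∈ Fintype.piFinset (fun _ : Fin p => Finset.range n),
      ∑ ρ : Equiv.Perm (Fin p),
      ∏ j ∈ Finset.range p, (S m j (gridPath x ρ j) + S m j (gridPath x ρ (j + 1))) =
      ∑ x ∈ Fintype.piFinset (fun _ : Fin p => Finset.range n), ∑ ρ : Equiv.Perm (Fin p),
      ∏ j ∈ Finset.range p, (s j (gridPath x ρ j) + s j (gridPath x ρ (j + 1))) := by
    intro m
    induction m with
    | zero => intro _; simp [hS]
    | succ m ih =>
      intro hm
      rw [← ih (by omega), ← sub_eq_zero, ← Finset.sum_sub_distrib]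
      have hst := stokes n (S m) (fun x => t m x + s m x) ⟨m, hm⟩ (hS0 m) (hS1 m)
        (fun x hx => by simp [hs0 ⟨m, hm⟩ x hx, htj ⟨m, hm⟩ x, hx])
        (fun x hx => by
          have h1 := hs1 ⟨m, hm⟩ x hx
          have h2 := htj ⟨m, hm⟩ x
          simp only at h1 h2
          rw [h1, h2, hx, hn1, CharTwo.add_self_eq_zero])
      rw [← hst]
      refine Finset.sum_congr rfl fun x _ => ?_
      rw [← Finset.sum_sub_distrib]
      refine Finset.sum_congr rfl fun ρ _ => ?_
      rw [← Finset.prod_range_mul_prod_Ico _ (show m + 1 ≤ p from hm),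
        ← Finset.prod_range_mul_prod_Ico _ (show m + 1 ≤ p from hm),
        Finset.prod_range_succ, Finset.prod_range_succ]
      have e1 : ∀ j ∈ Finset.range m, S (m + 1) j (gridPath x ρ j) +
          S (m + 1) j (gridPath x ρ (j + 1)) =
          S m j (gridPath x ρ j) + S m j (gridPath x ρ (j + 1)) := by
        intro j hj
        have := Finset.mem_range.1 hj
        simp [hS, this, show j < m + 1 by omega]
      have e2 : ∀ j ∈ Finset.Ico (m + 1) p, S (m + 1) j (gridPath x ρ j) +
          S (m + 1) j (gridPath x ρ (j + 1)) =
          S m j (gridPath x ρ j) + S m j (gridPath x ρ (j + 1)) := by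
        intro j hj
        have := Finset.mem_Ico.1 hj
        simp [hS, show ¬ j < m by omega, show ¬ j < m + 1 by omega]
      have e3 : S (m + 1) m = t m := by simp [hS]
      have e4 : S m m = s m := by simp [hS]
      rw [Finset.prod_congr rfl e1, Finset.prod_congr rfl e2, e3, e4, CharTwo.sub_eq_add]
      ring
  rw [← key p le_rfl]
  refine sum_coord n hn _ fun j x => ?_
  simp [hS, htj]

/-! ### The Poincaré–Miranda theorem -/

/-- Approximate zeros: some `t` has, for every `i`, points at distance at most `1 / n` where the `i`-th
component of `f` is nonpositive, respectively nonnegative. They are vertices of one cube of the grid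
of mesh `1 / n` on which all components change their label. -/
lemma exists_mixed_cube {p : ℕ} (n : ℕ) (hn : Odd n) (f : (Fin p → ℝ) → Fin p → ℝ)
    (hf0 : ∀ t ∈ Icc (0 : Fin p → ℝ) 1, ∀ i, t i = 0 → f t i ≤ 0)
    (hf1 : ∀ t ∈ Icc (0 : Fin p → ℝ) 1, ∀ i, t i = 1 → 0 ≤ f t i) :
    ∃ t ∈ Icc (0 : Fin p → ℝ) 1, ∀ i, ∃ a ∈ Icc (0 : Fin p → ℝ) 1, ∃ b ∈ Icc (0 : Fin p → ℝ) 1,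
      dist a t ≤ 1 / n ∧ dist b t ≤ 1 / n ∧ f a i ≤ 0 ∧ 0 ≤ f b i := by
  classical
  have hn0 : n ≠ 0 := by rintro rfl; simp at hn
  have hnpos : (0 : ℝ) < n := by positivity
  set g : (Fin p → ℕ) → Fin p → ℝ := fun x j => (x j : ℝ) / n with hg
  have hgmem : ∀ x : Fin p → ℕ, (∀ j, x j ≤ n) → g x ∈ Icc (0 : Fin p → ℝ) 1 := by
    intro x hx
    refine ⟨fun j => by simp only [hg, Pi.zero_apply]; positivity, fun j => ?_⟩
    simp only [hg, Pi.one_apply]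
    rw [div_le_one hnpos]
    exact_mod_cast hx j
  -- Label `0` stands for `f j ≤ 0`, label `1` for `0 ≤ f j`; on the faces, where both may hold, the
  -- label is prescribed.
  set s : ℕ → (Fin p → ℕ) → ZMod 2 := fun j x =>
    if h : j < p then
      if x ⟨j, h⟩ = 0 then 0 else if x ⟨j, h⟩ = n then 1 else if f (g x) ⟨j, h⟩ ≤ 0 then 0 else 1
    else 0 with hs
  have hsum := sum_labels n hn s
    (fun j x hx => by simp [hs, hx])
    (fun j x hx => by simp [hs, hx, hn0])
  obtain ⟨x, hx, hx'⟩ := Finset.exists_ne_zero_of_sum_ne_zero (hsum.trans_ne one_ne_zero)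
  obtain ⟨ρ, -, hρ⟩ := Finset.exists_ne_zero_of_sum_ne_zero hx'
  rw [Finset.prod_ne_zero_iff] at hρ
  simp only [Fintype.mem_piFinset, Finset.mem_range] at hx
  have hle : ∀ k j, gridPath x ρ k j ≤ n := by
    intro k j
    have := hx j
    simp only [gridPath]; split_ifs <;> omega
  have hdist : ∀ k, dist (g (gridPath x ρ k)) (g x) ≤ 1 / n := by
    intro k
    rw [dist_pi_le_iff (by positivity)]
    intro j
    rw [Real.dist_eq]
    simp only [hg, gridPath]
    rw [← sub_div, abs_div, abs_of_pos hnpos]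
    gcongr
    split_ifs <;> simp
  have hneg : ∀ (j : Fin p) k, s j (gridPath x ρ k) = 0 → f (g (gridPath x ρ k)) j ≤ 0 := by
    intro j k h
    simp only [hs, Fin.is_lt, dite_true, Fin.eta] at h
    split_ifs at h with h1 h2 h3
    · exact hf0 _ (hgmem _ (hle k)) j (by simp [hg, h1])
    · exact absurd h one_ne_zero
    · exact h3
    · exact absurd h one_ne_zero
  have hpos : ∀ (j : Fin p) k, s j (gridPath x ρ k) ≠ 0 → 0 ≤ f (g (gridPath x ρ k)) j := by
    intro j k h
    simp only [hs, Fin.is_lt, dite_true, Fin.eta] at h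
    split_ifs at h with h1 h2 h3
    · exact absurd rfl h
    · exact hf1 _ (hgmem _ (hle k)) j (by simp [hg, h2, hn0])
    · exact absurd rfl h
    · exact (not_le.1 h3).le
  refine ⟨g x, hgmem x fun j => (hx j).le, fun i => ?_⟩
  have hi := hρ i (Finset.mem_range.2 i.2)
  have h01 : ∀ z : ZMod 2, z = 0 ∨ z = 1 := by decide
  rcases eq_or_ne (s i (gridPath x ρ i)) 0 with h | h
  · rw [h, zero_add] at hi
    exact ⟨_, hgmem _ (hle i), _, hgmem _ (hle (i + 1)), hdist _, hdist _, hneg i _ h, hpos i _ hi⟩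
  · have h' : s i (gridPath x ρ (i + 1)) = 0 := by
      rcases h01 (s i (gridPath x ρ (i + 1))) with h' | h'
      · exact h'
      · rw [(h01 _).resolve_left h, h'] at hi
        exact absurd (CharTwo.add_self_eq_zero _) hi
    exact ⟨_, hgmem _ (hle (i + 1)), _, hgmem _ (hle i), hdist _, hdist _, hneg i _ h', hpos i _ h⟩

/-- The Poincaré–Miranda theorem on the cube `[0, 1]^p`. -/
theorem poincare_miranda {p : ℕ} (f : (Fin p → ℝ) → Fin p → ℝ) (hf : Continuous f)
    (hf0 : ∀ t ∈ Icc (0 : Fin p → ℝ) 1, ∀ i, t i = 0 → f t i ≤ 0)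
    (hf1 : ∀ t ∈ Icc (0 : Fin p → ℝ) 1, ∀ i, t i = 1 → 0 ≤ f t i) :
    ∃ t ∈ Icc (0 : Fin p → ℝ) 1, f t = 0 := by
  have h := fun m : ℕ => exists_mixed_cube (2 * m + 1) ⟨m, rfl⟩ f hf0 hf1
  choose t ht a ha b hb hat hbt hfa hfb using h
  obtain ⟨z, hz, φ, hφ, hlim⟩ := isCompact_Icc.tendsto_subseq ht
  have h0 : Filter.Tendsto (fun m => 1 / ((2 * φ m + 1 : ℕ) : ℝ)) Filter.atTop (nhds 0) := by
    have h1 : Filter.Tendsto (fun m => 2 * φ m + 1) Filter.atTop Filter.atTop :=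
      Filter.tendsto_atTop_mono (fun m => by omega) hφ.tendsto_atTop
    exact tendsto_one_div_atTop_nhds_zero_nat.comp h1
  have hnear : ∀ c : ℕ → Fin p → ℝ, (∀ m, dist (c m) (t (φ m)) ≤ 1 / ((2 * φ m + 1 : ℕ) : ℝ)) →
      Filter.Tendsto c Filter.atTop (nhds z) := by
    intro c hc
    refine (tendsto_iff_of_dist ?_).2 hlim
    exact squeeze_zero (fun _ => dist_nonneg) hc h0
  refine ⟨z, hz, funext fun i => ?_⟩
  have hfi : Continuous fun x => f x i := (continuous_apply i).comp hf
  apply le_antisymm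
  · exact le_of_tendsto ((hfi.tendsto z).comp (hnear (fun m => a (φ m) i) fun m => hat (φ m) i))
      (Filter.Eventually.of_forall fun m => hfa (φ m) i)
  · exact ge_of_tendsto ((hfi.tendsto z).comp (hnear (fun m => b (φ m) i) fun m => hbt (φ m) i))
      (Filter.Eventually.of_forall fun m => hfb (φ m) i)

/-! ### Multilinear interpolation of the multipliers -/

/-- given points (μ^α, ν^α) ∈ A^α for every α ∈ {0,1}^p and a
continuous function ψ with the prescribed sign properties, some convex
combination of the points satisfies ψ_i = 0 for all i ∈ J. -/
theorem convex_combination_psi_zero {p : ℕ} (J : Set (Fin p))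
    (ψ : (Fin p → ℝ) × (Fin p → ℝ) → Fin p → ℝ)
    (hψc : Continuous ψ)
    (hψ1 : ∀ a b : Fin p → ℝ, ∀ i ∈ J, 0 ≤ a i → ψ (a, b) i ≤ 0)
    (hψ2 : ∀ a b : Fin p → ℝ, ∀ i ∈ J, 0 ≤ b i → 0 ≤ ψ (a, b) i)
    (w : (Fin p → ℝ) → (Fin p → ℝ) × (Fin p → ℝ))
    (hw : ∀ α : Fin p → ℝ, IsBinaryVec α → w α ∈ Aset J α) :
    ∃ z ∈ convexHull ℝ (w '' {α : Fin p → ℝ | IsBinaryVec α}),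
      ∀ i ∈ J, ψ z i = 0 := by
  classical
  set e : (Fin p → Bool) → Fin p → ℝ := fun S j => if S j then 1 else 0 with he
  have heb : ∀ S, IsBinaryVec (e S) := fun S j => by
    cases h : S j <;> simp [he, h]
  -- the weights of the multilinear interpolation of the vertex values
  set c : (Fin p → ℝ) → (Fin p → Bool) → ℝ := fun t S => ∏ j, if S j then t j else 1 - t j with hc
  set W : (Fin p → ℝ) → (Fin p → ℝ) × (Fin p → ℝ) := fun t => ∑ S, c t S • w (e S) with hW
  have hcc : ∀ S, Continuous fun t => c t S := by
    intro S
    refine continuous_finsetProd _ fun j _ => ?_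
    split_ifs <;> fun_prop
  have hWc : Continuous W := by
    refine continuous_finsetSum _ fun S _ => (hcc S).smul continuous_const
  have hc0 : ∀ t ∈ Icc (0 : Fin p → ℝ) 1, ∀ S, 0 ≤ c t S := by
    intro t ht S
    refine Finset.prod_nonneg fun j _ => ?_
    have h0 := ht.1 j
    have h1 := ht.2 j
    simp only [Pi.zero_apply, Pi.one_apply] at h0 h1
    split_ifs <;> linarith
  have hc1 : ∀ t, ∑ S, c t S = 1 := by
    intro t
    have := Finset.prod_univ_sum (fun _ : Fin p => (Finset.univ : Finset Bool))
      (fun j b => if b then t j else 1 - t j)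
    simp only [Fintype.piFinset_univ] at this
    simp only [hc]
    rw [← this]
    simp
  have hW1 : ∀ t i, (W t).1 i = ∑ S, c t S * (w (e S)).1 i := by
    intro t i; simp [hW, Prod.fst_sum]
  have hW2 : ∀ t i, (W t).2 i = ∑ S, c t S * (w (e S)).2 i := by
    intro t i; simp [hW, Prod.snd_sum]
  -- The components outside `J` are irrelevant; `t i - 1 / 2` satisfies the sign conditions.
  obtain ⟨t, ht, hft⟩ := poincare_miranda
    (fun t i => if i ∈ J then ψ (W t) i else t i - 1 / 2)
    (by
      refine continuous_pi fun i => ?_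
      split_ifs
      · exact (continuous_apply i).comp (hψc.comp hWc)
      · fun_prop)
    (by
      intro t ht i hti
      split_ifs with hi
      · refine hψ1 (W t).1 (W t).2 i hi ?_
        rw [hW1]
        refine Finset.sum_nonneg fun S _ => ?_
        cases hS : S i
        · exact mul_nonneg (hc0 t ht S) ((hw _ (heb S)).1 i hi (by simp [he, hS]))
        · have : c t S = 0 := Finset.prod_eq_zero (Finset.mem_univ i) (by simp [hS, hti])
          simp [this]
      · rw [hti]; norm_num)
    (by
      intro t ht i hti
      split_ifs with hi
      · refine hψ2 (W t).1 (W t).2 i hi ?_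
        rw [hW2]
        refine Finset.sum_nonneg fun S _ => ?_
        cases hS : S i
        · have : c t S = 0 := Finset.prod_eq_zero (Finset.mem_univ i) (by simp [hS, hti])
          simp [this]
        · exact mul_nonneg (hc0 t ht S) ((hw _ (heb S)).2 i hi (by simp [he, hS]))
      · rw [hti]; norm_num)
  refine ⟨W t, ?_, fun i hi => ?_⟩
  · refine (convex_convexHull ℝ _).sum_mem (fun S _ => hc0 t ht S) (hc1 t) fun S _ => ?_
    exact subset_convexHull ℝ _ ⟨e S, heb S, rfl⟩
  · have := congrFun hft i
    simpa [hi] using this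
end

section
/- Suppose a feasible point x̄ of the MPCC is A_α-stationary for every α ∈ {0,1}^p. Then x̄ is P_α-stationary for every α ∈ {0,1}^p. -/
/-!
Fix `α`. For a biactive index `i` let `(a, c)` be `(μ i, ν i)` if `α i = 0` and `(ν i, μ i)` if
`α i = 1`. The continuous residual `min a (max (-c) 0)` (`pResidual`) vanishes exactly when
`a = 0` or both entries are nonnegative, that is, when the `P_α`-condition holds at `i`; it is
`≥ 0` where `a ≥ 0` and `≤ 0` where `c ≥ 0`.

For each set `s` of indices, A-stationarity for the vector obtained from `α` by flipping the
entries in `s` gives multipliers with `a ≥ 0` at the biactive `i ∉ s` and `c ≥ 0` at the biactive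
`i ∈ s`. Placing them at the vertices of the cube `[0,1]^p` and interpolating multilinearly gives a
continuous map from the cube to weak multipliers, because those form a convex set
(`convex_weakMult`). On the face `t i = 0` the `i`-th residual is `≥ 0`, and on the face `t i = 1`
it is `≤ 0`, so by the Poincaré–Miranda theorem (`poincare_miranda`) all residuals vanish
simultaneously at some point of the cube.

The Poincaré–Miranda theorem is derived from a parity statement (`kuhn_parity`), Sperner's lemma
for the Kuhn triangulation of the grid `{0, …, N}^p`: the number of simplices carrying all labels
`0, …, p` is odd. Its proof is by induction on `p`. A simplex is fully labelled iff it has an odd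
number of facets labelled `{1, …, p}` ("doors", `sum_doors`). Every inner facet belongs to two
simplices, and on the boundary doors occur only in the face `x 0 = N`, where they are the fully
labelled simplices of dimension `p - 1`.
-/

open Set Filter RealInnerProductSpace

noncomputable section

variable {n l m p : ℕ}

/-! ### Sperner's lemma for the Kuhn triangulation -/

/-- The label of a bit vector: `i + 1` for the largest `i` with `c i = true`, and `0` if all bits
are `false`. -/
def kuhnLabel : (p : ℕ) → (Fin p → Bool) → ℕ
  | 0, _ => 0
  | p + 1, c =>
    if kuhnLabel p (Fin.tail c) = 0 then (if c 0 = true then 1 else 0)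
    else kuhnLabel p (Fin.tail c) + 1

theorem kuhnLabel_le (p : ℕ) (c : Fin p → Bool) : kuhnLabel p c ≤ p := by
  induction p with
  | zero => simp [kuhnLabel]
  | succ p ih =>
    have := ih (Fin.tail c)
    simp only [kuhnLabel]
    split_ifs <;> omega

theorem kuhnLabel_ge (p : ℕ) (c : Fin p → Bool) (i : Fin p) (hi : c i = true) :
    (i : ℕ) + 1 ≤ kuhnLabel p c := by
  induction p with
  | zero => exact i.elim0
  | succ p ih =>
    simp only [kuhnLabel]
    refine Fin.cases (fun h0 => ?_) (fun j hj => ?_) i hi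
    · simp only [h0, Fin.val_zero]
      split_ifs <;> omega
    · have := ih (Fin.tail c) j hj
      rw [if_neg (by omega)]
      simpa using this

theorem kuhnLabel_eq_succ (p : ℕ) (c : Fin p → Bool) (i : Fin p)
    (hi : kuhnLabel p c = (i : ℕ) + 1) : c i = true := by
  induction p with
  | zero => exact i.elim0
  | succ p ih =>
    simp only [kuhnLabel] at hi
    revert hi
    refine Fin.cases (fun h0 => ?_) (fun j hj => ?_) i
    · rw [Fin.val_zero] at h0
      split_ifs at h0 with h h'
      · exact h'
      · omega
    · refine ih (Fin.tail c) j ?_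
      rw [Fin.val_succ] at hj
      split_ifs at hj <;> omega

theorem kuhnLabel_cons_true (p : ℕ) (c : Fin (p + 1) → Bool) (h : c 0 = true) :
    kuhnLabel (p + 1) c = kuhnLabel p (Fin.tail c) + 1 := by
  simp only [kuhnLabel, h]
  split_ifs <;> simp_all

/-- The `k`-th vertex of the Kuhn simplex with base point `x`. The permutation `τ` gives, for each
coordinate, the time of its unit step: coordinate `i` has been raised by one at the vertices
`k > τ i`. The simplex has the `p + 1` vertices `k = 0, …, p`. -/
def kuhnVertex {p : ℕ} (x : Fin p → ℕ) (τ : Equiv.Perm (Fin p)) (k : ℕ) : Fin p → ℕ :=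
  fun i => x i + if (τ i : ℕ) < k then 1 else 0

/-- The base points `{0, …, N - 1}^p` of the unit cubes of the grid `{0, …, N}^p`. -/
def kuhnBox (p N : ℕ) : Finset (Fin p → ℕ) := Fintype.piFinset fun _ => Finset.range N

/-- Door counting in a single simplex, modulo 2. The vertices are the elements of `s`, labelled by
`a`, and a vertex is counted if the facet opposite to it carries exactly the labels in `T`. If all
labels of `insert z T` occur, only the vertex labelled `z` counts. If just the labels of `T` occur,
exactly one label is repeated and precisely its two vertices count. -/
theorem sum_doors (a : ℕ → ℕ) (s T : Finset ℕ) (z : ℕ) (hz : z ∉ T)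
    (hcard : s.card = T.card + 1) (ha : ∀ k ∈ s, a k ∈ insert z T) :
    ∑ k ∈ s, (if (s.erase k).image a = T then (1 : ZMod 2) else 0) =
      if s.image a = insert z T then 1 else 0 := by
  classical
  have hsub : s.image a ⊆ insert z T := Finset.image_subset_iff.2 ha
  by_cases hfull : s.image a = insert z T
  · rw [if_pos hfull]
    have hinj : Set.InjOn a s := by
      apply Finset.card_image_iff.1
      rw [hfull, Finset.card_insert_of_notMem hz, hcard]
    obtain ⟨k, hk, hkz⟩ : ∃ k ∈ s, a k = z := by
      have : z ∈ s.image a := by rw [hfull]; simp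
      simpa using this
    rw [Finset.sum_eq_single k]
    · rw [if_pos]
      ext v
      have hv : v ∈ s.image a ↔ v ∈ insert z T := by rw [hfull]
      simp only [Finset.mem_image, Finset.mem_erase, Finset.mem_insert] at hv ⊢
      constructor
      · rintro ⟨j, ⟨hjk, hj⟩, rfl⟩
        rcases hv.1 ⟨j, hj, rfl⟩ with h | h
        · exact absurd (hinj hj hk (h.trans hkz.symm)) hjk
        · exact h
      · intro hvT
        obtain ⟨j, hj, rfl⟩ := hv.2 (Or.inr hvT)
        refine ⟨j, ⟨?_, hj⟩, rfl⟩
        rintro rfl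
        exact hz (hkz ▸ hvT)
    · intro j hj hjk
      rw [if_neg]
      intro h
      apply hz
      rw [← h, ← hkz]
      exact Finset.mem_image_of_mem _ (Finset.mem_erase.2 ⟨hjk.symm, hk⟩)
    · intro h; exact absurd hk h
  · rw [if_neg hfull]
    by_cases hT : s.image a = T
    · -- exactly one pair of indices shares a label
      have hnot : ¬ Set.InjOn a s := by
        intro h
        have := Finset.card_image_iff.2 h
        rw [hT] at this; omega
      obtain ⟨k₁, hk₁, k₂, hk₂, h12, hne⟩ : ∃ k₁ ∈ s, ∃ k₂ ∈ s, a k₁ = a k₂ ∧ k₁ ≠ k₂ := by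
        by_contra! hcon
        exact hnot fun x hx y hy hxy => hcon x hx y hy hxy
      have herase : ∀ j k, j ∈ s → k ∈ s → a j = a k → j ≠ k → (s.erase k).image a = T := by
        intro j k hj hk hjk hne
        rw [← hT]
        refine Finset.Subset.antisymm (Finset.image_subset_image (Finset.erase_subset _ _)) ?_
        intro v hv
        obtain ⟨i, hi, rfl⟩ := Finset.mem_image.1 hv
        by_cases hik : i = k
        · subst hik
          rw [← hjk]
          exact Finset.mem_image_of_mem _ (Finset.mem_erase.2 ⟨hne, hj⟩)
        · exact Finset.mem_image_of_mem _ (Finset.mem_erase.2 ⟨hik, hi⟩)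
      have hrest : ∀ j ∈ s, j ≠ k₁ → j ≠ k₂ → (s.erase j).image a ≠ T := by
        intro j hj hj1 hj2 h
        have hinj : Set.InjOn a (s.erase j : Finset ℕ) := by
          apply Finset.card_image_iff.1
          rw [h, Finset.card_erase_of_mem hj]; omega
        exact hne (hinj (by simp [hk₁, hj1.symm]) (by simp [hk₂, hj2.symm]) h12)
      rw [← Finset.sum_subset (s₁ := {k₁, k₂})]
      · rw [Finset.sum_pair hne, if_pos (herase k₂ k₁ hk₂ hk₁ h12.symm hne.symm),
          if_pos (herase k₁ k₂ hk₁ hk₂ h12 hne)]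
        exact CharTwo.add_self_eq_zero 1
      · intro j hj
        rcases Finset.mem_insert.1 hj with rfl | hj
        · exact hk₁
        · rw [Finset.mem_singleton.1 hj]; exact hk₂
      · intro j hj hj'
        simp only [Finset.mem_insert, Finset.mem_singleton, not_or] at hj'
        rw [if_neg (hrest j hj hj'.1 hj'.2)]
    · apply Finset.sum_eq_zero
      intro k hk
      rw [if_neg]
      intro h
      have hTs : T ⊆ s.image a := by
        rw [← h]; exact Finset.image_subset_image (Finset.erase_subset _ _)
      by_cases hzs : z ∈ s.image a
      · exact hfull (Finset.Subset.antisymm hsub (Finset.insert_subset hzs hTs))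
      · refine hT (Finset.Subset.antisymm (fun v hv => ?_) hTs)
        rcases Finset.mem_insert.1 (hsub hv) with rfl | hvT
        · exact absurd hv hzs
        · exact hvT

/-- Modulo 2, the sum of `c (x + eᵢ) + c x` over the box telescopes in direction `i`. -/
theorem sum_box_telescope {p : ℕ} (N : ℕ) (i : Fin p) (c : (Fin p → ℕ) → ZMod 2) :
    ∑ x ∈ kuhnBox p N, (c (x + Pi.single i 1) + c x) =
      ∑ x ∈ kuhnBox p N with x i + 1 = N, c (x + Pi.single i 1) +
        ∑ x ∈ kuhnBox p N with x i = 0, c x := by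
  classical
  have key : ∑ x ∈ kuhnBox p N with ¬ x i + 1 = N, c (x + Pi.single i 1) =
      ∑ x ∈ kuhnBox p N with ¬ x i = 0, c x := by
    refine Finset.sum_nbij' (fun x => x + Pi.single i 1) (fun x => x - Pi.single i 1)
      ?_ ?_ ?_ ?_ ?_
    · intro x hx
      simp only [kuhnBox, Finset.mem_filter, Fintype.mem_piFinset, Finset.mem_range] at hx ⊢
      refine ⟨fun j => ?_, by simp⟩
      have h1 := hx.1 j
      by_cases hj : j = i
      · subst hj; simp only [Pi.add_apply, Pi.single_eq_same]; omega
      · simpa [hj] using h1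
    · intro x hx
      simp only [kuhnBox, Finset.mem_filter, Fintype.mem_piFinset, Finset.mem_range] at hx ⊢
      have h2 := hx.1 i
      refine ⟨fun j => lt_of_le_of_lt (by simp) (hx.1 j), ?_⟩
      simp only [Pi.sub_apply, Pi.single_eq_same]; omega
    · intro x hx; simp
    · intro x hx
      simp only [Finset.mem_filter] at hx
      ext j
      by_cases hj : j = i
      · subst hj; simp only [Pi.add_apply, Pi.sub_apply, Pi.single_eq_same]; omega
      · simp [hj]
    · intro x hx; rfl
  have s₁ := Finset.sum_filter_add_sum_filter_not (kuhnBox p N) (fun x => x i + 1 = N)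
    (fun x => c (x + Pi.single i 1))
  have s₂ := Finset.sum_filter_add_sum_filter_not (kuhnBox p N) (fun x => x i = 0) c
  rw [Finset.sum_add_distrib, ← s₁, ← s₂, key]
  have := CharTwo.add_self_eq_zero (∑ x ∈ kuhnBox p N with ¬ x i = 0, c x)
  linear_combination this

/-- The number of fully labelled Kuhn simplices of the grid `{0, …, N}^p` is odd, if bit `i` is
`false` on the face `x i = 0` and `true` on the face `x i = N`. -/
theorem kuhn_parity (p N : ℕ) (hN : 0 < N) (b : (Fin p → ℕ) → Fin p → Bool)
    (h0 : ∀ x i, x i = 0 → b x i = false) (h1 : ∀ x i, x i = N → b x i = true) :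
    ∑ τ : Equiv.Perm (Fin p), ∑ x ∈ kuhnBox p N,
      (if (Finset.range (p + 1)).image (fun k => kuhnLabel p (b (kuhnVertex x τ k))) =
        Finset.range (p + 1) then (1 : ZMod 2) else 0) = 1 := by
  classical
  induction p with
  | zero =>
    simp [kuhnBox, kuhnLabel]
  | succ p ih =>
    set T : Finset ℕ := Finset.Icc 1 (p + 1) with hTdef
    have hins : Finset.range (p + 1 + 1) = insert 0 T := by
      ext v; simp [hTdef]; omega
    -- `E x τ k` detects whether dropping the `k`-th vertex leaves a facet labelled by `T`
    set E : (Fin (p + 1) → ℕ) → Equiv.Perm (Fin (p + 1)) → ℕ → ZMod 2 := fun x τ k =>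
      if ((Finset.range (p + 2)).erase k).image
        (fun k => kuhnLabel (p + 1) (b (kuhnVertex x τ k))) = T then 1 else 0 with hE
    have hdoor : ∀ τ x, (if (Finset.range (p + 1 + 1)).image
        (fun k => kuhnLabel (p + 1) (b (kuhnVertex x τ k))) =
        Finset.range (p + 1 + 1) then (1 : ZMod 2) else 0) =
        ∑ k ∈ Finset.range p, E x τ (k + 1) + (E x τ 0 + E x τ (p + 1)) := by
      intro τ x
      have := sum_doors (fun k => kuhnLabel (p + 1) (b (kuhnVertex x τ k)))
        (Finset.range (p + 2)) T 0 (by simp [hTdef]) (by simp [hTdef]) (by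
          intro k _
          have := kuhnLabel_le (p + 1) (b (kuhnVertex x τ k))
          rw [← hins, Finset.mem_range]; omega)
      rw [← hins] at this
      rw [← this, Finset.sum_range_succ, Finset.sum_range_succ']
      ring
    -- facets opposite to an inner vertex come in pairs: exchanging the steps `k` and `k + 1`
    -- changes only the vertex `k + 1`
    have hmid : ∀ x, ∀ k ∈ Finset.range p, ∑ τ, E x τ (k + 1) = 0 := by
      intro x k hk
      rw [Finset.mem_range] at hk
      set s : Equiv.Perm (Fin (p + 1)) := Equiv.swap ⟨k, by omega⟩ ⟨k + 1, by omega⟩ with hs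
      have hval : ∀ (τ : Equiv.Perm (Fin (p + 1))), ∀ j, j ≠ k + 1 →
          kuhnVertex x (s * τ) j = kuhnVertex x τ j := by
        intro τ j hj
        ext i
        simp only [kuhnVertex, Equiv.Perm.mul_apply]
        congr 1
        have : ((s (τ i) : Fin (p + 1)) : ℕ) < j ↔ (τ i : ℕ) < j := by
          rw [hs, Equiv.swap_apply_def]
          split_ifs with h h'
          · rw [h]; simp; omega
          · rw [h']; simp; omega
          · rfl
        simp only [this]
      refine Finset.sum_involution (fun τ _ => s * τ) ?_ ?_ ?_ ?_
      · intro τ _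
        have : E x (s * τ) (k + 1) = E x τ (k + 1) := by
          simp only [hE]
          congr 2
          refine Finset.image_congr fun j hj => ?_
          have hj' : j ≠ k + 1 := (Finset.mem_erase.1 hj).1
          simp only [hval τ j hj']
        rw [this]; exact CharTwo.add_self_eq_zero _
      · intro τ _ _ h
        have h' : s = 1 := by simpa using h
        rw [hs, Equiv.swap_eq_one_iff] at h'
        simp at h'
      · intro τ _; exact Finset.mem_univ _
      · intro τ _
        rw [← mul_assoc, hs, Equiv.swap_mul_self, one_mul]
    have hlast : ∀ x τ, E x τ (p + 1) = if (Finset.range (p + 1)).image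
        (fun k => kuhnLabel (p + 1) (b (kuhnVertex x τ k))) = T then 1 else 0 := by
      intro x τ
      have : (Finset.range (p + 2)).erase (p + 1) = Finset.range (p + 1) := by
        ext v; simp; omega
      simp only [hE, this]
    have hfirst : ∀ x τ, E x τ 0 = if (Finset.range (p + 1)).image
        (fun k => kuhnLabel (p + 1) (b (kuhnVertex x τ (k + 1)))) = T then 1 else 0 := by
      intro x τ
      have : (Finset.range (p + 2)).erase 0 = (Finset.range (p + 1)).image (· + 1) := by
        ext v
        simp only [Finset.mem_erase, Finset.mem_range, Finset.mem_image]
        constructor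
        · rintro ⟨h, h'⟩; exact ⟨v - 1, by omega, by omega⟩
        · rintro ⟨a, ha, rfl⟩; omega
      simp only [hE, this, Finset.image_image]
      rfl
    -- `R` shifts all times back by one, cyclically. The facet opposite to vertex `0` of `(x, τ)` is
    -- the facet opposite to the last vertex of `(x + e, R * τ)`, where `e` is the first unit step.
    set R : Equiv.Perm (Fin (p + 1)) := (finRotate (p + 1))⁻¹ with hR
    have hRot : ∀ (x : Fin (p + 1) → ℕ) (τ : Equiv.Perm (Fin (p + 1))), ∀ k ≤ p,
        kuhnVertex x τ (k + 1) = kuhnVertex (x + Pi.single (τ⁻¹ 0) 1) (R * τ) k := by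
      intro x τ k hk
      ext i
      obtain ⟨v, hv⟩ : ∃ v, v = R (τ i) := ⟨_, rfl⟩
      have hv' : τ i = finRotate (p + 1) v := by rw [hv, hR]; simp
      simp only [kuhnVertex, Equiv.Perm.mul_apply, ← hv, Pi.add_apply]
      by_cases hi : i = τ⁻¹ 0
      · have hτ : τ i = 0 := by rw [hi]; simp
        have hvl : v = Fin.last p := by
          apply (finRotate (p + 1)).injective
          rw [← hv', hτ, finRotate_last]
        rw [hτ, hvl, hi]
        simp; omega
      · have hτ : τ i ≠ 0 := fun h => hi (by rw [← h]; simp)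
        have hvl : v ≠ Fin.last p := by
          rintro rfl
          rw [finRotate_last] at hv'; exact hτ hv'
        have : (τ i : ℕ) = v + 1 := by
          rw [hv', coe_finRotate_of_ne_last hvl]
        rw [this, Pi.single_eq_of_ne hi]
        simp
    have hshift : ∀ x τ, E x τ 0 = E (x + Pi.single (τ⁻¹ 0) 1) (R * τ) (p + 1) := by
      intro x τ
      rw [hfirst, hlast]
      congr 2
      refine Finset.image_congr fun k hk => ?_
      have : k ≤ p := by have := Finset.mem_range.1 hk; omega
      simp only [hRot x τ k this]
    -- no door lies in a face `x i = 0`, nor in a face `x i = N` with `i ≠ 0`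
    have hbot : ∀ x (τ : Equiv.Perm (Fin (p + 1))), x (τ⁻¹ 0) = 0 → E x (R * τ) (p + 1) = 0 := by
      intro x τ hx
      rw [hlast, if_neg]
      intro h
      have hmem : ((τ⁻¹ 0 : Fin (p + 1)) : ℕ) + 1 ∈ T := by
        have := (τ⁻¹ 0 : Fin (p + 1)).isLt
        simp only [hTdef, Finset.mem_Icc]; omega
      rw [← h] at hmem
      obtain ⟨k, hk, hkl⟩ := Finset.mem_image.1 hmem
      have ht := kuhnLabel_eq_succ _ _ _ hkl
      rw [h0] at ht
      · exact absurd ht (by simp)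
      · have hlastR : R 0 = Fin.last p := by
          rw [hR, Equiv.Perm.inv_eq_iff_eq, finRotate_last]
        have := Finset.mem_range.1 hk
        have hττ : (R * τ) (τ⁻¹ 0) = Fin.last p := by simp [hlastR]
        rw [kuhnVertex, hx, hττ, Fin.val_last, if_neg (by omega)]
    have htop : ∀ x (τ : Equiv.Perm (Fin (p + 1))), x (τ⁻¹ 0) + 1 = N → τ 0 ≠ 0 →
        E x τ 0 = 0 := by
      intro x τ hx hτ
      rw [hfirst, if_neg]
      intro h
      have hmem : 1 ∈ T := by simp [hTdef]
      rw [← h] at hmem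
      obtain ⟨k, hk, hkl⟩ := Finset.mem_image.1 hmem
      have hb : b (kuhnVertex x τ (k + 1)) (τ⁻¹ 0) = true := by
        apply h1
        have hττ : τ (τ⁻¹ 0) = 0 := by simp
        rw [kuhnVertex, hττ, Fin.val_zero, if_pos (Nat.succ_pos k), hx]
      have hge := kuhnLabel_ge _ _ _ hb
      rw [hkl] at hge
      apply hτ
      have : τ⁻¹ 0 = 0 := by apply Fin.ext; rw [Fin.val_zero]; omega
      exact (Equiv.Perm.inv_eq_iff_eq.1 this).symm
    have hends : ∑ τ, ∑ x ∈ kuhnBox (p + 1) N, (E x τ 0 + E x τ (p + 1)) =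
        ∑ τ : Equiv.Perm (Fin (p + 1)), ∑ x ∈ kuhnBox (p + 1) N with x (τ⁻¹ 0) + 1 = N,
          E x τ 0 := by
      have hre : ∑ τ, ∑ x ∈ kuhnBox (p + 1) N, E x τ (p + 1) =
          ∑ τ, ∑ x ∈ kuhnBox (p + 1) N, E x (R * τ) (p + 1) :=
        (Equiv.sum_comp (Equiv.mulLeft R)
          (fun τ => ∑ x ∈ kuhnBox (p + 1) N, E x τ (p + 1))).symm
      simp only [Finset.sum_add_distrib]
      rw [hre, ← Finset.sum_add_distrib]
      refine Finset.sum_congr rfl fun τ _ => ?_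
      rw [← Finset.sum_add_distrib]
      simp only [hshift]
      rw [sum_box_telescope N (τ⁻¹ 0) (fun x => E x (R * τ) (p + 1))]
      rw [add_eq_left]
      refine Finset.sum_eq_zero fun x hx => hbot x τ (Finset.mem_filter.1 hx).2
    -- the doors in the face `x 0 = N` are the fully labelled simplices of dimension `p`
    have hmain : ∑ τ : Equiv.Perm (Fin (p + 1)),
        ∑ x ∈ kuhnBox (p + 1) N with x (τ⁻¹ 0) + 1 = N, E x τ 0 = 1 := by
      rw [← ih (fun y => Fin.tail (b (Fin.cons N y)))
        (fun x i hx => h0 _ i.succ (by simpa using hx))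
        (fun x i hx => h1 _ i.succ (by simpa using hx))]
      rw [← Equiv.sum_comp Equiv.Perm.decomposeFin.symm, Fintype.sum_prod_type,
        Finset.sum_eq_single 0]
      · refine Finset.sum_congr rfl fun e _ => ?_
        set τ : Equiv.Perm (Fin (p + 1)) := Equiv.Perm.decomposeFin.symm (0, e) with hτ
        have hτ0 : τ 0 = 0 := by simp [hτ]
        have hτs : ∀ j : Fin p, τ j.succ = (e j).succ := by intro j; simp [hτ]
        have hinv : τ⁻¹ 0 = 0 := by rw [Equiv.Perm.inv_eq_iff_eq, hτ0]
        rw [hinv]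
        refine Finset.sum_nbij' (fun x => Fin.tail x) (fun y => Fin.cons (N - 1) y) ?_ ?_ ?_ ?_ ?_
        · intro x hx
          simp only [kuhnBox, Finset.mem_filter, Fintype.mem_piFinset] at hx ⊢
          exact fun j => hx.1 j.succ
        · intro y hy
          simp only [kuhnBox, Finset.mem_filter, Fintype.mem_piFinset] at hy ⊢
          refine ⟨fun j => ?_, by simp; omega⟩
          refine Fin.cases ?_ (fun j => ?_) j
          · simp; omega
          · simpa using hy j
        · intro x hx
          have := (Finset.mem_filter.1 hx).2
          have hx0 : N - 1 = x 0 := by omega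
          simp only [hx0, Fin.cons_self_tail]
        · intro y hy; simp
        · intro x hx
          have hx0 := (Finset.mem_filter.1 hx).2
          rw [hfirst]
          have hv : ∀ k, kuhnVertex x τ (k + 1) = Fin.cons N (kuhnVertex (Fin.tail x) e k) := by
            intro k
            ext i
            refine Fin.cases ?_ (fun j => ?_) i
            · simp [kuhnVertex, hτ0, hx0]
            · simp [kuhnVertex, hτs, Fin.tail]
          have hl : (fun k => kuhnLabel (p + 1) (b (kuhnVertex x τ (k + 1)))) =
              (· + 1) ∘ fun k =>
                kuhnLabel p (Fin.tail (b (Fin.cons N (kuhnVertex (Fin.tail x) e k)))) := by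
            funext k
            simp only [Function.comp]
            rw [hv k, kuhnLabel_cons_true _ _ (h1 _ 0 (by simp))]
          have hTs : T = (Finset.range (p + 1)).image (· + 1) := by
            ext v
            simp only [hTdef, Finset.mem_Icc, Finset.mem_range, Finset.mem_image]
            constructor
            · rintro ⟨h, h'⟩; exact ⟨v - 1, by omega, by omega⟩
            · rintro ⟨a, ha, rfl⟩; omega
          rw [hl, ← Finset.image_image, hTs]
          congr 1
          exact propext (Finset.image_injective (add_left_injective 1)).eq_iff
      · intro q _ hq
        refine Finset.sum_eq_zero fun e _ => Finset.sum_eq_zero fun x hx => ?_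
        exact htop x _ (Finset.mem_filter.1 hx).2 (by simpa using hq)
      · intro h; exact absurd (Finset.mem_univ _) h
    simp only [hdoor, Finset.sum_add_distrib (f := fun x => ∑ k ∈ Finset.range p, _)]
    rw [Finset.sum_add_distrib, hends, hmain, add_eq_right]
    rw [Finset.sum_comm]
    refine Finset.sum_eq_zero fun x _ => ?_
    rw [Finset.sum_comm]
    exact Finset.sum_eq_zero (hmid x)

/-! ### The Poincaré–Miranda theorem -/

/-- Approximate zeros: a fully labelled simplex of a fine grid has, for every `i`, a vertex with
`φ i ≥ 0` (the one labelled `0`) and a vertex with `φ i ≤ 0` (the one labelled `i + 1`). -/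
theorem poincare_miranda_approx {p : ℕ} (φ : (Fin p → ℝ) → Fin p → ℝ) (hφ : Continuous φ)
    (h0 : ∀ t ∈ Set.Icc (0 : Fin p → ℝ) 1, ∀ i, t i = 0 → 0 ≤ φ t i)
    (h1 : ∀ t ∈ Set.Icc (0 : Fin p → ℝ) 1, ∀ i, t i = 1 → φ t i ≤ 0)
    (ε : ℝ) (hε : 0 < ε) :
    ∃ t ∈ Set.Icc (0 : Fin p → ℝ) 1, ∀ i, |φ t i| ≤ ε := by
  classical
  obtain ⟨δ, hδ, huc⟩ := Metric.uniformContinuousOn_iff.1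
    ((isCompact_Icc (a := (0 : Fin p → ℝ)) (b := 1)).uniformContinuousOn_of_continuous
      hφ.continuousOn) ε hε
  obtain ⟨M, hM⟩ := exists_nat_one_div_lt hδ
  set N : ℕ := M + 1 with hN
  have hNpos : (0 : ℝ) < N := by rw [hN]; positivity
  have hMN : 1 / (N : ℝ) < δ := by rw [hN]; push_cast; exact hM
  set pt : (Fin p → ℕ) → Fin p → ℝ := fun v i => (v i : ℝ) / N with hpt
  -- on the faces `v i = 0` and `v i = N` the bit is prescribed, since `φ i` may vanish there
  set b : (Fin p → ℕ) → Fin p → Bool := fun v i =>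
    if v i = 0 then false else if v i = N then true else decide (φ (pt v) i < 0) with hb
  have hpar := kuhn_parity p N (Nat.succ_pos M) b
    (fun v i hv => by simp [hb, hv]) (fun v i hv => by simp [hb, hv, hN])
  obtain ⟨τ, x, hx, hfull⟩ : ∃ τ : Equiv.Perm (Fin p), ∃ x ∈ kuhnBox p N,
      (Finset.range (p + 1)).image (fun k => kuhnLabel p (b (kuhnVertex x τ k))) =
        Finset.range (p + 1) := by
    by_contra! hcon
    rw [Finset.sum_eq_zero fun τ _ => Finset.sum_eq_zero fun x hx => if_neg (hcon τ x hx)] at hpar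
    exact zero_ne_one hpar
  have hxN : ∀ i, x i < N := by simpa [kuhnBox] using hx
  have hcube : ∀ k, pt (kuhnVertex x τ k) ∈ Set.Icc (0 : Fin p → ℝ) 1 := by
    intro k
    refine ⟨fun i => by simp only [hpt, Pi.zero_apply]; positivity, fun i => ?_⟩
    have : kuhnVertex x τ k i ≤ N := by
      have := hxN i
      simp only [kuhnVertex]; split_ifs <;> omega
    simp only [hpt, Pi.one_apply]
    rw [div_le_one hNpos]
    exact_mod_cast this
  have hclose : ∀ k i, |φ (pt (kuhnVertex x τ k)) i - φ (pt (kuhnVertex x τ 0)) i| < ε := by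
    intro k i
    refine lt_of_le_of_lt (dist_le_pi_dist (φ (pt (kuhnVertex x τ k)))
      (φ (pt (kuhnVertex x τ 0))) i) (huc _ (hcube k) _ (hcube 0) ?_)
    refine lt_of_le_of_lt ((dist_pi_le_iff (by positivity)).2 fun j => ?_) hMN
    rw [Real.dist_eq]
    simp only [hpt, kuhnVertex, ← sub_div, abs_div, abs_of_pos hNpos]
    gcongr
    split_ifs <;> simp_all
  refine ⟨pt (kuhnVertex x τ 0), hcube 0, fun i => abs_le.2 ⟨?_, ?_⟩⟩
  · obtain ⟨k, -, hk⟩ := Finset.mem_image.1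
      (hfull.ge (show 0 ∈ Finset.range (p + 1) by simp))
    have hbf : b (kuhnVertex x τ k) i = false := by
      by_contra hne
      have := kuhnLabel_ge p _ i (by simpa using hne)
      omega
    have hnn : 0 ≤ φ (pt (kuhnVertex x τ k)) i := by
      simp only [hb] at hbf
      split_ifs at hbf with hc hc'
      · exact h0 _ (hcube k) i (by simp [hpt, hc])
      · simpa using hbf
    have := (abs_lt.1 (hclose k i)).2
    linarith
  · obtain ⟨k, -, hk⟩ := Finset.mem_image.1
      (hfull.ge (show (i : ℕ) + 1 ∈ Finset.range (p + 1) by simp))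
    have hbt := kuhnLabel_eq_succ p _ i hk
    have hnp : φ (pt (kuhnVertex x τ k)) i ≤ 0 := by
      simp only [hb] at hbt
      split_ifs at hbt with hc hc'
      · exact h1 _ (hcube k) i (by simp only [hpt, hc']; exact div_self hNpos.ne')
      · exact le_of_lt (by simpa using hbt)
    have := (abs_lt.1 (hclose k i)).1
    linarith

/-- Poincaré–Miranda: a continuous map on the cube `[0,1]^p` whose `i`-th component is `≥ 0` on the
face `t i = 0` and `≤ 0` on the face `t i = 1`, for every `i`, has a zero in the cube. -/
theorem poincare_miranda_s4 {p : ℕ} (φ : (Fin p → ℝ) → Fin p → ℝ) (hφ : Continuous φ)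
    (h0 : ∀ t ∈ Set.Icc (0 : Fin p → ℝ) 1, ∀ i, t i = 0 → 0 ≤ φ t i)
    (h1 : ∀ t ∈ Set.Icc (0 : Fin p → ℝ) 1, ∀ i, t i = 1 → φ t i ≤ 0) :
    ∃ t ∈ Set.Icc (0 : Fin p → ℝ) 1, φ t = 0 := by
  obtain ⟨t, ht, hmin⟩ := (isCompact_Icc (a := (0 : Fin p → ℝ)) (b := 1)).exists_isMinOn
    ⟨0, by simp⟩ hφ.norm.continuousOn
  refine ⟨t, ht, ?_⟩
  by_contra hne
  have hpos : 0 < ‖φ t‖ := norm_pos_iff.2 hne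
  obtain ⟨s, hs, hle⟩ := poincare_miranda_approx φ hφ h0 h1 (‖φ t‖ / 2) (by positivity)
  have h2 : ‖φ s‖ ≤ ‖φ t‖ / 2 := (pi_norm_le_iff_of_nonneg (by positivity)).2 hle
  have h3 : ‖φ t‖ ≤ ‖φ s‖ := hmin hs
  linarith

/-! ### Interpolation of multipliers -/

theorem convex_weakMult {n l m p : ℕ} (f : Rn n → ℝ) (g : Fin l → Rn n → ℝ)
    (h : Fin m → Rn n → ℝ) (G H : Fin p → Rn n → ℝ) (xb : Rn n) :
    Convex ℝ {q : (Fin l → ℝ) × (Fin m → ℝ) × (Fin p → ℝ) × (Fin p → ℝ) |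
      MpccWeakMult f g h G H xb q.1 q.2.1 q.2.2.1 q.2.2.2} := by
  rintro ⟨l₁, e₁, m₁, n₁⟩ ⟨hq₁, hg₁, hg₁', hG₁, hH₁⟩ ⟨l₂, e₂, m₂, n₂⟩ ⟨hq₂, hg₂, hg₂', hG₂, hH₂⟩
    a b ha hb hab
  simp only at hq₁ hg₁ hg₁' hG₁ hH₁ hq₂ hg₂ hg₂' hG₂ hH₂
  refine ⟨?_, fun i hi => ?_, fun i hi => ?_, fun i hi hip => ?_, fun i hi hip => ?_⟩
  · have hf : gradient f xb = a • gradient f xb + b • gradient f xb := by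
      rw [← add_smul, hab, one_smul]
    have key := congrArg₂ (fun u v => a • u + b • v) hq₁ hq₂
    simp only [smul_zero, add_zero] at key
    rw [← key]
    simp only [Prod.fst_add, Prod.snd_add, Prod.smul_fst, Prod.smul_snd, Pi.add_apply,
      Pi.smul_apply, smul_eq_mul, add_smul, mul_smul, Finset.sum_add_distrib, ← Finset.smul_sum]
    nth_rw 1 [hf]
    module
  · have := hg₁ i hi
    have := hg₂ i hi
    simp only [Prod.fst_add, Prod.smul_fst, Pi.add_apply, Pi.smul_apply, smul_eq_mul]
    positivity
  · simp [hg₁' i hi, hg₂' i hi]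
  · simp [hG₁ i hi hip, hG₂ i hi hip]
  · simp [hH₁ i hi hip, hH₂ i hi hip]

/-- The weight at `t ∈ [0,1]^p` of the cube vertex with indicator set `s` in multilinear
interpolation. -/
def cubeWeight {p : ℕ} (t : Fin p → ℝ) (s : Finset (Fin p)) : ℝ :=
  (∏ i ∈ s, t i) * ∏ i ∈ Finset.univ \ s, (1 - t i)

theorem cubeWeight_nonneg {p : ℕ} {t : Fin p → ℝ} (ht : t ∈ Set.Icc (0 : Fin p → ℝ) 1)
    (s : Finset (Fin p)) : 0 ≤ cubeWeight t s :=
  mul_nonneg (Finset.prod_nonneg fun i _ => ht.1 i)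
    (Finset.prod_nonneg fun i _ => sub_nonneg.2 (ht.2 i))

theorem sum_cubeWeight {p : ℕ} (t : Fin p → ℝ) : ∑ s, cubeWeight t s = 1 := by
  have := Finset.prod_add t (fun i => 1 - t i) Finset.univ
  simpa [cubeWeight] using this.symm

theorem sum_cubeWeight_nonneg {p : ℕ} {t : Fin p → ℝ} (ht : t ∈ Set.Icc (0 : Fin p → ℝ) 1)
    (r : Finset (Fin p) → ℝ) (hr : ∀ s, cubeWeight t s ≠ 0 → 0 ≤ r s) :
    0 ≤ ∑ s, cubeWeight t s * r s := by
  refine Finset.sum_nonneg fun s _ => ?_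
  by_cases hs : cubeWeight t s = 0
  · simp [hs]
  · exact mul_nonneg (cubeWeight_nonneg ht s) (hr s hs)

theorem notMem_of_cubeWeight_ne_zero {p : ℕ} {t : Fin p → ℝ} {s : Finset (Fin p)} {i : Fin p}
    (hi : t i = 0) (hs : cubeWeight t s ≠ 0) : i ∉ s := fun h =>
  hs (by rw [cubeWeight, Finset.prod_eq_zero h hi, zero_mul])

theorem mem_of_cubeWeight_ne_zero {p : ℕ} {t : Fin p → ℝ} {s : Finset (Fin p)} {i : Fin p}
    (hi : t i = 1) (hs : cubeWeight t s ≠ 0) : i ∈ s := by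
  by_contra h
  refine hs ?_
  rw [cubeWeight, Finset.prod_eq_zero (s := Finset.univ \ s) (i := i) (by simpa using h)
    (by rw [hi, sub_self]), mul_zero]

/-- A continuous residual of the condition "`a` and `c` are nonnegative, or `a = 0`", signed so that
it is nonnegative for `a ≥ 0` and nonpositive for `c ≥ 0`. -/
def pResidual (a c : ℝ) : ℝ := min a (max (-c) 0)

theorem pResidual_nonneg {a c : ℝ} (ha : 0 ≤ a) : 0 ≤ pResidual a c :=
  le_min ha (le_max_right _ _)

theorem pResidual_nonpos {a c : ℝ} (hc : 0 ≤ c) : pResidual a c ≤ 0 :=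
  (min_le_right _ _).trans (max_le (by linarith) le_rfl)

theorem pResidual_eq_zero {a c : ℝ} (h : pResidual a c = 0) : (0 ≤ a ∧ 0 ≤ c) ∨ a = 0 := by
  unfold pResidual at h
  rcases min_choice a (max (-c) 0) with h' | h'
  · exact Or.inr (h' ▸ h)
  · rw [h'] at h
    refine Or.inl ⟨?_, ?_⟩
    · have := min_le_left a (max (-c) 0)
      rw [h', h] at this; exact this
    · have := le_max_left (-c) 0
      rw [h] at this; linarith

/-- A_α-stationarity for all α ∈ {0,1}^p implies
P_α-stationarity for all α ∈ {0,1}^p. -/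
theorem mpcc_AStat_all_implies_PStat_all {n l m p : ℕ} (f : Rn n → ℝ) (g : Fin l → Rn n → ℝ)
    (h : Fin m → Rn n → ℝ) (G H : Fin p → Rn n → ℝ) (xb : Rn n)
    (hf : Differentiable ℝ f) (hg : ∀ i, Differentiable ℝ (g i))
    (hh : ∀ i, Differentiable ℝ (h i)) (hG : ∀ i, Differentiable ℝ (G i))
    (hH : ∀ i, Differentiable ℝ (H i))
    (hfeas : xb ∈ MpccFeasible g h G H)
    (hA : ∀ α : Fin p → ℝ, IsBinaryVec α → MpccAStat f g h G H xb α) :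
    ∀ α : Fin p → ℝ, IsBinaryVec α → MpccPStat f g h G H xb α := by
  classical
  intro α hα
  have hbin : ∀ s : Finset (Fin p), IsBinaryVec (fun i => if i ∈ s then 1 - α i else α i) := by
    intro s i
    rcases hα i with h | h <;> by_cases hi : i ∈ s <;> simp [h, hi]
  -- `s` is the set of coordinates in which the sign pattern differs from `α`
  choose L E M V hW hM hV using fun s => hA _ (hbin s)
  have hW' : ∀ t ∈ Set.Icc (0 : Fin p → ℝ) 1, MpccWeakMult f g h G H xb
      (∑ s, cubeWeight t s • L s) (∑ s, cubeWeight t s • E s)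
      (∑ s, cubeWeight t s • M s) (∑ s, cubeWeight t s • V s) := by
    intro t ht
    have := (convex_weakMult f g h G H xb).sum_mem (t := Finset.univ) (w := cubeWeight t)
      (z := fun s => (L s, E s, M s, V s)) (fun s _ => cubeWeight_nonneg ht s)
      (sum_cubeWeight t) (fun s _ => hW s)
    simpa [Prod.fst_sum, Prod.snd_sum] using this
  -- `(A t i, C t i)` is the interpolated pair `(μ i, ν i)`, with entries exchanged if `α i = 1`
  set A : (Fin p → ℝ) → Fin p → ℝ := fun t i =>
    ∑ s, cubeWeight t s * (if α i = 0 then M s i else V s i) with hAdef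
  set C : (Fin p → ℝ) → Fin p → ℝ := fun t i =>
    ∑ s, cubeWeight t s * (if α i = 0 then V s i else M s i) with hCdef
  set φ : (Fin p → ℝ) → Fin p → ℝ := fun t i =>
    if G i xb = 0 ∧ H i xb = 0 then pResidual (A t i) (C t i) else 0 with hφ
  have hcont : Continuous φ := by
    refine continuous_pi fun i => ?_
    simp only [hφ]
    by_cases hi : G i xb = 0 ∧ H i xb = 0
    · simp only [if_pos hi, pResidual, hAdef, hCdef, cubeWeight]
      fun_prop
    · simp only [if_neg hi]
      exact continuous_const
  obtain ⟨t, ht, hzero⟩ := poincare_miranda_s4 φ hcont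
    (by
      intro t ht i hi
      simp only [hφ]
      split_ifs with hb
      · refine pResidual_nonneg (sum_cubeWeight_nonneg ht _ fun s hs => ?_)
        have hns := notMem_of_cubeWeight_ne_zero hi hs
        rcases hα i with h | h
        · simpa [h] using hM s i hb.1 hb.2 (by simp [hns, h])
        · simpa [h] using hV s i hb.1 hb.2 (by simp [hns, h])
      · exact le_rfl)
    (by
      intro t ht i hi
      simp only [hφ]
      split_ifs with hb
      · refine pResidual_nonpos (sum_cubeWeight_nonneg ht _ fun s hs => ?_)
        have hns := mem_of_cubeWeight_ne_zero hi hs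
        rcases hα i with h | h
        · simpa [h] using hV s i hb.1 hb.2 (by simp [hns, h])
        · simpa [h] using hM s i hb.1 hb.2 (by simp [hns, h])
      · exact le_rfl)
  refine ⟨_, _, _, _, hW' t ht, fun i hGi hHi hi => ?_, fun i hGi hHi hi => ?_⟩
  · have hz := congrFun hzero i
    simp only [hφ, hGi, hHi, and_self, if_true, Pi.zero_apply] at hz
    simpa [hAdef, hCdef, hi] using pResidual_eq_zero hz
  · have hz := congrFun hzero i
    simp only [hφ, hGi, hHi, and_self, if_true, Pi.zero_apply] at hz
    have := pResidual_eq_zero hz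
    simp only [hAdef, hCdef, hi, one_ne_zero, if_false] at this
    rw [and_comm] at this
    simpa using this
end
end

section
/- Let p ∈ ℕ and J ⊆ {1,…,p}, and for each i ∈ {1,…,p} let C_i ⊆ (−∞,0]×(−∞,0] be a closed, connected and unbounded set with 0 ∈ C_i. For each α ∈ {0,1}^p let a point (μ^α, ν^α) ∈ A^α be given. Then there exists a point (μ̄, ν̄) in the convex hull of {(μ^α, ν^α) : α ∈ {0,1}^p} such that for every i ∈ J, either (μ̄_i ≥ 0 and ν̄_i ≥ 0) or (μ̄_i, ν̄_i) ∈ C_i. -/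
/-!
The points `w α` are interpolated multilinearly over the cube `[0,1]^p`, giving a continuous map `z`
into the convex hull. On the face `t i = 0` only the vertices with `α i = 0` contribute, so the
first coordinate of `z t i` is nonnegative there; on `t i = 1` the second one is.

Each `C i` is replaced by a curve `γ i` in the nonpositive quadrant, `ε`-close to `C i`, running
from `0` to a point whose coordinate sum is very negative (`exists_path_near`): an
`ε`-neighbourhood of a connected set is open and connected, hence path connected. Prolong `γ i`
beyond `0` along the diagonal of the nonnegative quadrant. Likewise prolong the parameter range of
`t i` on both sides, moving `z t i` there in the direction `(1,-1)`, respectively `(-1,1)`. The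
equations saying that `z t i` is the point of the prolonged curve at parameter `s i`, written in
the coordinates `μ - ν` and `μ + ν`, then form a system in the `2p` unknowns `(t, s)` with the sign conditions of
the Poincaré–Miranda theorem. Any solution lies on the original curve or has both coordinates
nonnegative (`exists_approx_mem`), and compactness of the cube lets `ε → 0` (`exists_mem`).

Poincaré–Miranda is derived from Brouwer's fixed point theorem, and the latter from
`exists_add_eq_zero`: if `g` is `C¹` and vanishes outside a ball `B`, then `id + g` has a zero.
For a polynomial `φ`, the integral `∫_B φ(x + t g(x)) det(1 + t Dg(x)) dx` is a polynomial in `t`,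
and for small `t` it equals `∫_B φ` by change of variables, since `id + t g` is then a bijection of
`B` with positive Jacobian. Hence the equality holds at `t = 1` too. If `id + g` omitted `0`, the
choice `φ(y) = (1 - |y|² / M)^m` with `m → ∞`, which concentrates at `0`, would contradict it.
-/

open Set

/-! ### Zeros of compactly supported `C¹` perturbations of the identity -/

/-- The value at `x` and `t` of a polynomial in `t` whose coefficients are continuous functions
of `x`. -/
noncomputable def polyEval {E : Type*} [TopologicalSpace E] (x : E) (t : ℝ) :
    Polynomial C(E, ℝ) →+* ℝ :=
  Polynomial.eval₂RingHom ((Pi.evalRingHom (fun _ : E => ℝ) x).comp ContinuousMap.coeFnRingHom) t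

lemma polyEval_C {E : Type*} [TopologicalSpace E] (x : E) (t : ℝ) (f : C(E, ℝ)) :
    polyEval x t (Polynomial.C f) = f x := by
  simp [polyEval]

lemma polyEval_X {E : Type*} [TopologicalSpace E] (x : E) (t : ℝ) :
    polyEval x t Polynomial.X = t := by
  simp [polyEval]

lemma exists_polynomial_integral {ι : Type*} [Fintype ι] (P : Polynomial C(ι → ℝ, ℝ))
    {B : Set (ι → ℝ)} (hB : IsCompact B) :
    ∃ Q : Polynomial ℝ, ∀ t, Q.eval t = ∫ x in B, polyEval x t P := by
  refine ⟨∑ k ∈ Finset.range (P.natDegree + 1),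
    Polynomial.C (∫ x in B, P.coeff k x) * Polynomial.X ^ k, fun t => ?_⟩
  have h : ∀ x, polyEval x t P
      = ∑ k ∈ Finset.range (P.natDegree + 1), P.coeff k x * t ^ k := fun x => by
    simp [polyEval, Polynomial.eval₂_eq_sum_range]
  simp_rw [h]
  rw [MeasureTheory.integral_finsetSum]
  · simp [Polynomial.eval_finsetSum, MeasureTheory.integral_mul_const]
  · intro k _
    exact ContinuousOn.integrableOn_compact hB (by fun_prop)

lemma exists_polyEval_eq_det {ι : Type*} [Fintype ι] [DecidableEq ι] {g : (ι → ℝ) → (ι → ℝ)}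
    (hg : ContDiff ℝ 1 g) : ∃ P : Polynomial C(ι → ℝ, ℝ), ∀ x t,
      polyEval x t P = (ContinuousLinearMap.id ℝ (ι → ℝ) + t • fderiv ℝ g x).det := by
  have hc : Continuous (fderiv ℝ g) := hg.continuous_fderiv (by simp)
  let M : Matrix ι ι C(ι → ℝ, ℝ) := Matrix.of fun i j =>
    ⟨fun x => fderiv ℝ g x (Pi.single j 1) i, by fun_prop⟩
  refine ⟨(1 + (Polynomial.X : Polynomial C(ι → ℝ, ℝ)) • M.map Polynomial.C).det, fun x t => ?_⟩
  rw [RingHom.map_det, ContinuousLinearMap.det, ← LinearMap.det_toMatrix']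
  congr 1
  ext i j
  simp [polyEval_C, polyEval_X, LinearMap.toMatrix'_apply, Matrix.one_apply, Pi.single_apply, M,
    apply_ite, mul_comm t]

/-- If `|t|` times the Lipschitz constant of `g` is below `1`, then `x + t g(x) = y` says that `x` is
the fixed point of a contraction. -/
lemma bijective_add_smul {E : Type*} [NormedAddCommGroup E] [NormedSpace ℝ E] [CompleteSpace E]
    {g : E → E} {K : NNReal} (hK : LipschitzWith K g) {t : ℝ} (ht : |t| * K < 1) :
    Function.Bijective fun x => x + t • g x := by
  have hct : ∀ y, ContractingWith (‖t‖₊ * K) fun x => y - t • g x := fun y => by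
    refine ⟨by rw [← NNReal.coe_lt_coe]; simpa using ht, LipschitzWith.of_dist_le_mul fun a b => ?_⟩
    rw [dist_sub_left, dist_smul₀]
    have := hK.dist_le_mul a b
    push_cast
    rw [mul_assoc]
    gcongr
  constructor
  · intro a b hab
    refine (hct (a + t • g a)).fixedPoint_unique' ?_ ?_
    · simp [Function.IsFixedPt]
    · simp only at hab
      simp [Function.IsFixedPt, hab]
  · intro y
    have := (hct y).fixedPoint_isFixedPt
    exact ⟨_, (sub_eq_iff_eq_add.1 this).symm⟩

/-- The change of variables formula `∫_B φ(x + g(x)) det(1 + Dg(x)) dx = ∫_B φ` for the test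
functions `φ(y) = (1 - c |y|²)^m`. No injectivity of `id + g` is needed: the identity is proved
for `t g` with small `t`, and both sides are polynomial in `t`. -/
lemma integral_comp_mul_det {ι : Type*} [Fintype ι] [DecidableEq ι] {g : (ι → ℝ) → (ι → ℝ)}
    (hg : ContDiff ℝ 1 g) {R : ℝ} (hR : ∀ x, x ∉ Metric.closedBall 0 R → g x = 0)
    (c : ℝ) (m : ℕ) :
    ∫ x in Metric.closedBall (0 : ι → ℝ) R, (1 - c * ∑ i, (x + g x) i ^ 2) ^ m *
        (ContinuousLinearMap.id ℝ (ι → ℝ) + fderiv ℝ g x).det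
      = ∫ x in Metric.closedBall (0 : ι → ℝ) R, (1 - c * ∑ i, x i ^ 2) ^ m := by
  set B := Metric.closedBall (0 : ι → ℝ) R with hBdef
  have hB : IsCompact B := isCompact_closedBall _ _
  obtain ⟨D, hD⟩ := exists_polyEval_eq_det hg
  have hgc := hg.continuous
  have hfc : Continuous (fderiv ℝ g) := hg.continuous_fderiv (by simp)
  let P : Polynomial C(ι → ℝ, ℝ) := (1 - Polynomial.C (ContinuousMap.const _ c) *
    ∑ i, (Polynomial.C ⟨fun x => x i, by fun_prop⟩ +
      Polynomial.X * Polynomial.C ⟨fun x => g x i, by fun_prop⟩) ^ 2) ^ m * D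
  have hP : ∀ x t, polyEval x t P = (1 - c * ∑ i, (x + t • g x) i ^ 2) ^ m *
      (ContinuousLinearMap.id ℝ (ι → ℝ) + t • fderiv ℝ g x).det := fun x t => by
    simp [P, polyEval_C, polyEval_X, hD, mul_comm t]
  obtain ⟨Q, hQ⟩ := exists_polynomial_integral P hB
  obtain ⟨K, hK⟩ := hg.lipschitzWith_of_hasCompactSupport
    (HasCompactSupport.intro hB hR) (by simp)
  -- for small `t` the map `x ↦ x + t • g x` is an orientation preserving bijection of the ball
  have hsmall : ∀ᶠ t : ℝ in nhds 0, Q.eval t = ∫ x in B, (1 - c * ∑ i, x i ^ 2) ^ m := by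
    have h1 : ∀ᶠ t : ℝ in nhds 0, |t| * K < 1 := by
      have : Continuous fun t : ℝ => |t| * K := by fun_prop
      exact this.continuousAt.eventually_lt continuousAt_const (by simp)
    have h2 : ∀ᶠ t : ℝ in nhds 0, ∀ x ∈ B,
        0 < (ContinuousLinearMap.id ℝ (ι → ℝ) + t • fderiv ℝ g x).det := by
      refine hB.eventually_forall_of_forall_eventually fun y _ => ?_
      have : Continuous fun z : ℝ × (ι → ℝ) =>
          (ContinuousLinearMap.id ℝ (ι → ℝ) + z.1 • fderiv ℝ g z.2).det := by
        exact ContinuousLinearMap.continuous_det.comp (by fun_prop)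
      refine continuousAt_const.eventually_lt this.continuousAt ?_
      simp [ContinuousLinearMap.det]
    filter_upwards [h1, h2] with t ht1 ht2
    have hbij := bijective_add_smul hK ht1
    have himg : (fun x => x + t • g x) '' B = B := by
      have hoff : ∀ x, x ∉ B → x + t • g x = x := fun x hx => by simp [hR x hx]
      ext y
      constructor
      · rintro ⟨x, hx, rfl⟩
        by_contra hy
        have := hbij.1 (hoff _ hy)
        simp only at this hy
        rw [this] at hy
        exact hy hx
      · intro hy
        obtain ⟨x, rfl⟩ := hbij.2 y
        refine ⟨x, ?_, rfl⟩
        by_contra hx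
        simp only [hoff x hx] at hy
        exact hx hy
    have hcv := MeasureTheory.integral_image_eq_integral_abs_det_fderiv_smul MeasureTheory.volume
      hB.measurableSet
      (f := fun x => x + t • g x)
      (f' := fun x => ContinuousLinearMap.id ℝ (ι → ℝ) + t • fderiv ℝ g x)
      (fun x _ => ((hasFDerivAt_id x).add
        ((hg.differentiable (by simp) x).hasFDerivAt.const_smul t)).hasFDerivWithinAt)
      hbij.1.injOn (fun x => (1 - c * ∑ i, x i ^ 2) ^ m)
    rw [himg] at hcv
    rw [hQ, hcv]
    refine MeasureTheory.setIntegral_congr_fun hB.measurableSet fun x hx => ?_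
    simp only [hP, smul_eq_mul, abs_of_pos (ht2 x hx)]
    ring
  have hQC : Q = Polynomial.C (∫ x in B, (1 - c * ∑ i, x i ^ 2) ^ m) := by
    refine Polynomial.eq_of_infinite_eval_eq _ _ (infinite_of_mem_nhds 0 ?_)
    filter_upwards [hsmall] with t ht
    simpa using ht
  have := hQ 1
  rw [hQC] at this
  simpa [hP] using this.symm

/-- The zero comes from letting `m → ∞` in `integral_comp_mul_det`: the test functions concentrate
at `0`, whereas `x + g x` would stay away from `0` on the ball. -/
lemma exists_add_eq_zero {ι : Type*} [Fintype ι] {g : (ι → ℝ) → (ι → ℝ)}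
    (hg : ContDiff ℝ 1 g) {R : ℝ} (hR0 : 0 < R)
    (hR : ∀ x, x ∉ Metric.closedBall 0 R → g x = 0) : ∃ x, x + g x = 0 := by
  classical
  by_contra! hne
  set B := Metric.closedBall (0 : ι → ℝ) R with hBdef
  have hB : IsCompact B := isCompact_closedBall _ _
  have hB0 : (0 : ι → ℝ) ∈ B := by simp [hBdef, hR0.le]
  have hgc := hg.continuous
  have hfc : Continuous (fderiv ℝ g) := hg.continuous_fderiv (by simp)
  let q : (ι → ℝ) → ℝ := fun y => ∑ i, y i ^ 2
  have hqc : Continuous q := by fun_prop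
  have hq0 : ∀ y, 0 ≤ q y := fun y => Finset.sum_nonneg fun i _ => sq_nonneg _
  have hqpos : ∀ y, y ≠ 0 → 0 < q y := fun y hy => by
    refine lt_of_le_of_ne (hq0 y) fun h => hy ?_
    have := (Finset.sum_eq_zero_iff_of_nonneg (fun i _ => sq_nonneg (y i))).1 h.symm
    ext i
    simpa using this i (Finset.mem_univ i)
  obtain ⟨x₀, -, hx₀⟩ := hB.exists_isMinOn ⟨0, hB0⟩
    (f := fun x => q (x + g x)) (by fun_prop)
  set δ := q (x₀ + g x₀) with hδ
  have hδ0 : 0 < δ := hqpos _ (hne _)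
  obtain ⟨M₁, hM₁⟩ := hB.bddAbove_image (f := q) (by fun_prop)
  obtain ⟨M₂, hM₂⟩ := hB.bddAbove_image (f := fun x => q (x + g x)) (by fun_prop)
  obtain ⟨M, hM1, hM2, hMδ⟩ : ∃ M, M₁ ≤ M ∧ M₂ ≤ M ∧ δ < M :=
    ⟨max (max M₁ M₂) (δ + 1), by simp, by simp, by simp⟩
  have hM0 : 0 < M := hδ0.trans hMδ
  let J : (ι → ℝ) → ℝ := fun x => (ContinuousLinearMap.id ℝ (ι → ℝ) + fderiv ℝ g x).det
  have hJc : Continuous J := ContinuousLinearMap.continuous_det.comp (by fun_prop)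
  -- on `S` the test function is exponentially larger in `m` than where `δ ≤ q`
  let S := B ∩ {x | q x ≤ δ / 2}
  have hSc : IsCompact S := hB.inter_right (isClosed_le hqc continuous_const)
  let v := MeasureTheory.volume.real S
  have hv : 0 < v := by
    refine ENNReal.toReal_pos (ne_of_gt ?_) hSc.measure_ne_top
    refine MeasureTheory.Measure.measure_pos_of_mem_nhds _ (x := 0) ?_
    refine Filter.inter_mem (Metric.closedBall_mem_nhds _ hR0) ?_
    have : ∀ᶠ x in nhds (0 : ι → ℝ), q x < δ / 2 :=
      hqc.continuousAt.eventually_lt continuousAt_const (by simp [q, hδ0])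
    exact this.mono fun x hx => hx.le
  let A := ∫ x in B, |J x|
  have key : ∀ m : ℕ, (1 - M⁻¹ * (δ / 2)) ^ m * v ≤ (1 - M⁻¹ * δ) ^ m * A := by
    intro m
    have heq := integral_comp_mul_det hg hR M⁻¹ m
    have hMi : 0 < M⁻¹ := inv_pos.2 hM0
    have hle1 : ∀ y, q y ≤ M → 0 ≤ 1 - M⁻¹ * q y := fun y hy => by
      have : M⁻¹ * q y ≤ M⁻¹ * M := by gcongr
      rw [inv_mul_cancel₀ hM0.ne'] at this
      linarith
    have hint : MeasureTheory.IntegrableOn (fun x => (1 - M⁻¹ * q x) ^ m) B :=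
      ContinuousOn.integrableOn_compact hB (by fun_prop)
    have hδ2 : 0 ≤ 1 - M⁻¹ * (δ / 2) := by
      have : M⁻¹ * (δ / 2) ≤ M⁻¹ * M := by gcongr; linarith
      rw [inv_mul_cancel₀ hM0.ne'] at this
      linarith
    calc (1 - M⁻¹ * (δ / 2)) ^ m * v = ∫ x in S, (1 - M⁻¹ * (δ / 2)) ^ m := by
          simp [v, mul_comm]
      _ ≤ ∫ x in S, (1 - M⁻¹ * q x) ^ m := by
          refine MeasureTheory.setIntegral_mono_on
            (ContinuousOn.integrableOn_compact hSc (by fun_prop))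
            (hint.mono_set inter_subset_left) hSc.measurableSet fun x hx => ?_
          have : q x ≤ δ / 2 := hx.2
          gcongr
      _ ≤ ∫ x in B, (1 - M⁻¹ * q x) ^ m := by
          refine MeasureTheory.setIntegral_mono_set hint ?_ inter_subset_left.eventuallyLE
          refine (MeasureTheory.ae_restrict_iff' hB.measurableSet).2 (.of_forall fun x hx => ?_)
          exact pow_nonneg (hle1 x ((hM₁ (mem_image_of_mem _ hx)).trans hM1)) m
      _ = ∫ x in B, (1 - M⁻¹ * q (x + g x)) ^ m * J x := heq.symm
      _ ≤ ∫ x in B, (1 - M⁻¹ * δ) ^ m * |J x| := by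
          refine MeasureTheory.setIntegral_mono_on
            (ContinuousOn.integrableOn_compact hB (by fun_prop))
            (ContinuousOn.integrableOn_compact hB (by fun_prop)) hB.measurableSet fun x hx => ?_
          have h0 := hle1 (x + g x) ((hM₂ (mem_image_of_mem _ hx)).trans hM2)
          have h1 : δ ≤ q (x + g x) := hx₀ hx
          calc (1 - M⁻¹ * q (x + g x)) ^ m * J x ≤ (1 - M⁻¹ * q (x + g x)) ^ m * |J x| := by
                gcongr
                exact le_abs_self _
            _ ≤ _ := by gcongr
      _ = _ := by rw [MeasureTheory.integral_const_mul]
  set a := 1 - M⁻¹ * δ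
  set b := 1 - M⁻¹ * (δ / 2)
  have hMi : 0 < M⁻¹ := inv_pos.2 hM0
  have hab : a < b := by
    simp only [a, b]
    nlinarith [mul_pos hMi hδ0]
  have ha : 0 ≤ a := by
    have : M⁻¹ * δ ≤ M⁻¹ * M := by gcongr
    rw [inv_mul_cancel₀ hM0.ne'] at this
    simp only [a]
    linarith
  have hb : 0 < b := ha.trans_lt hab
  have hlim : Filter.Tendsto (fun m : ℕ => (a / b) ^ m * A) Filter.atTop (nhds (0 * A)) :=
    (tendsto_pow_atTop_nhds_zero_of_lt_one (by positivity) ((div_lt_one hb).2 hab)).mul_const A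
  have : v ≤ 0 * A := by
    refine ge_of_tendsto' hlim fun m => ?_
    rw [div_pow, div_mul_eq_mul_div, le_div_iff₀ (by positivity), mul_comm]
    exact key m
  linarith

/-! ### Brouwer and Poincaré–Miranda -/

/-- **Brouwer's fixed point theorem**, for bounded uniformly continuous self-maps of `ℝ^ι`. -/
lemma exists_fixedPoint_of_bounded {ι : Type*} [Fintype ι] {f : (ι → ℝ) → (ι → ℝ)}
    (hf : UniformContinuous f) {R : ℝ} (hR : ∀ x, ‖f x‖ ≤ R) : ∃ x, f x = x := by
  have hR0 : 0 ≤ R := (norm_nonneg _).trans (hR 0)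
  -- approximate fixed points, by smoothing `f` and cutting off
  have happrox : ∀ ε, 0 < ε → ε ≤ 1 → ∃ x ∈ Metric.closedBall (0 : ι → ℝ) (R + 1),
      dist (f x) x < ε := by
    intro ε hε hε1
    obtain ⟨h, hh, hhf⟩ := hf.exists_contDiff_dist_le hε
    have hhR : ∀ x, ‖h x‖ < R + 1 := fun x => by
      have h1 := hhf x
      rw [dist_comm, dist_eq_norm] at h1
      have h2 := norm_le_norm_add_norm_sub (f x) (h x)
      linarith [hR x]
    let χ : ContDiffBump (0 : ι → ℝ) := ⟨R + 1, R + 2, by linarith, by linarith⟩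
    obtain ⟨x, hx⟩ := exists_add_eq_zero (g := fun x => -(χ x • h x)) (R := R + 2)
      ((χ.contDiff.smul (hh.of_le (by simp))).neg) (by linarith) (fun x hx => by
        have : χ x = 0 := χ.zero_of_le_dist (by
          simp only [Metric.mem_closedBall, not_le] at hx
          exact hx.le)
        simp [this])
    have hx' : x = χ x • h x := by simpa [add_neg_eq_zero] using hx
    have hxB : x ∈ Metric.closedBall (0 : ι → ℝ) (R + 1) := by
      rw [mem_closedBall_zero_iff, hx', norm_smul, Real.norm_of_nonneg χ.nonneg]
      exact (mul_le_of_le_one_left (norm_nonneg _) χ.le_one).trans (hhR x).le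
    have hχ : χ x = 1 := χ.one_of_mem_closedBall hxB
    rw [hχ, one_smul] at hx'
    refine ⟨x, hxB, ?_⟩
    rw [dist_comm]
    calc dist x (f x) = dist (h x) (f x) := by rw [← hx']
      _ < ε := hhf x
  have hfc := hf.continuous
  obtain ⟨x, hx, hmin⟩ := (isCompact_closedBall (0 : ι → ℝ) (R + 1)).exists_isMinOn
    ⟨0, by simp; linarith⟩ (f := fun x => dist (f x) x) (by fun_prop)
  refine ⟨x, dist_le_zero.1 (le_of_forall_pos_lt_add fun ε hε => ?_)⟩
  obtain ⟨y, hy, hyε⟩ := happrox (min ε 1) (by positivity) (min_le_right _ _)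
  have : dist (f x) x ≤ dist (f y) y := hmin hy
  rw [zero_add]
  exact this.trans_lt (hyε.trans_le (min_le_left _ _))

/-- **Poincaré–Miranda theorem** on the cube `[-1,1]^ι`, obtained by applying the fixed point
theorem to `x ↦ x + F x` truncated to the cube. -/
lemma poincare_miranda_s6 {ι : Type*} [Fintype ι] {F : (ι → ℝ) → (ι → ℝ)} (hF : Continuous F)
    (hlo : ∀ x ∈ Icc (-1 : ι → ℝ) 1, ∀ i, x i = -1 → 0 ≤ F x i)
    (hhi : ∀ x ∈ Icc (-1 : ι → ℝ) 1, ∀ i, x i = 1 → F x i ≤ 0) :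
    ∃ x ∈ Icc (-1 : ι → ℝ) 1, F x = 0 := by
  -- the coordinatewise retraction onto the cube
  let c : (ι → ℝ) → (ι → ℝ) := fun x i => max (-1) (min 1 (x i))
  have hcc : Continuous c := by fun_prop
  have hcm : ∀ x, c x ∈ Icc (-1 : ι → ℝ) 1 := fun x =>
    ⟨fun i => le_max_left _ _, fun i => max_le (by simp) (min_le_left _ _)⟩
  have hcu : UniformContinuous c := by
    have : LipschitzWith 1 c := by
      refine LipschitzWith.of_dist_le_mul fun x y => ?_
      rw [NNReal.coe_one, one_mul]
      refine (dist_pi_le_iff dist_nonneg).2 fun i => le_trans ?_ (dist_le_pi_dist x y i)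
      simp only [c, Real.dist_eq]
      refine (abs_max_sub_max_le_max _ _ _ _).trans ?_
      simp only [sub_self, abs_zero]
      refine max_le (abs_nonneg _) ((abs_min_sub_min_le_max _ _ _ _).trans ?_)
      simp
    exact this.uniformContinuous
  have hu : UniformContinuous fun x => c (c x + F (c x)) := by
    have h1 : UniformContinuousOn (fun x => c (x + F x)) (Icc (-1 : ι → ℝ) 1) :=
      isCompact_Icc.uniformContinuousOn_of_continuous (by fun_prop)
    rw [← uniformContinuousOn_univ] at hcu ⊢
    exact h1.comp hcu fun x _ => hcm x
  obtain ⟨x, hx⟩ := exists_fixedPoint_of_bounded hu (R := 1) fun x =>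
    (pi_norm_le_iff_of_nonneg zero_le_one).2 fun i =>
      abs_le.2 ⟨(hcm _).1 i, (hcm _).2 i⟩
  have hxm : x ∈ Icc (-1 : ι → ℝ) 1 := hx ▸ hcm _
  have hcx : c x = x := by
    ext i
    have h1 := hxm.1 i
    have h2 := hxm.2 i
    simp only [Pi.neg_apply, Pi.one_apply] at h1 h2
    simp [c, h1, h2]
  refine ⟨x, hxm, ?_⟩
  ext i
  have hi := congrFun hx i
  have h1 := hxm.1 i
  have h2 := hxm.2 i
  simp only [hcx] at hi
  simp only [Pi.neg_apply, Pi.one_apply, c, Pi.add_apply, Pi.zero_apply] at h1 h2 hi ⊢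
  have hl := hlo x hxm i
  have hh := hhi x hxm i
  rcases lt_trichotomy (F x i) 0 with h | h | h
  · rw [min_eq_right (by linarith)] at hi
    rcases max_choice (-1) (x i + F x i) with h' | h' <;> rw [h'] at hi
    · linarith [hl hi.symm]
    · linarith
  · exact h
  · rw [max_eq_right (le_min (by norm_num) (by linarith))] at hi
    rcases min_choice 1 (x i + F x i) with h' | h' <;> rw [h'] at hi
    · linarith [hh hi.symm]
    · linarith

/-! ### Curves close to the sets `C i` and the crossing argument -/

/-- A connected unbounded set through `0` in the nonpositive quadrant is followed up to `ε`
by a curve in that quadrant which starts at `0` and ends with coordinate sum at most `-b`. -/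
lemma exists_path_near {C : Set (ℝ × ℝ)} (hsub : C ⊆ Iic (0 : ℝ) ×ˢ Iic (0 : ℝ))
    (hconn : IsConnected C) (hunb : ¬ Bornology.IsBounded C) (h0 : (0 : ℝ × ℝ) ∈ C)
    {ε : ℝ} (hε : 0 < ε) (b : ℝ) :
    ∃ γ : ℝ → ℝ × ℝ, Continuous γ ∧ (∀ s ≤ 0, γ s = 0) ∧ (γ 1).1 + (γ 1).2 ≤ -b ∧
      ∀ s, (γ s).1 ≤ 0 ∧ (γ s).2 ≤ 0 ∧ Metric.infDist (γ s) C < ε := by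
  obtain ⟨x, hx, hxb⟩ : ∃ x ∈ C, x.1 + x.2 ≤ -b := by
    by_contra! h
    refine hunb ((Metric.isBounded_Icc (-b, -b) (0 : ℝ × ℝ)).subset fun y hy => ?_)
    have h1 := hsub hy
    have h2 := h y hy
    simp only [mem_prod, mem_Iic] at h1
    exact ⟨⟨by simp only; linarith, by simp only; linarith⟩, ⟨h1.1, h1.2⟩⟩
  have hT : IsPathConnected (Metric.thickening ε C) := by
    rw [← Metric.isOpen_thickening.isConnected_iff_isPathConnected]
    refine ⟨⟨0, Metric.self_subset_thickening hε _ h0⟩, ?_⟩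
    have : Metric.thickening ε C = (fun z : (ℝ × ℝ) × (ℝ × ℝ) => z.1 + z.2) ''
        (C ×ˢ Metric.ball 0 ε) := by
      rw [image_prod, image2_add, add_ball_zero]
    rw [this]
    exact (hconn.isPreconnected.prod (convex_ball _ _).isPreconnected).image _ (by fun_prop)
  obtain ⟨γ, hγ⟩ := hT.joinedIn 0 (Metric.self_subset_thickening hε _ h0) x
    (Metric.self_subset_thickening hε _ hx)
  have hxneg := hsub hx
  simp only [mem_prod, mem_Iic] at hxneg
  -- truncating at `0` keeps the curve close to `C`, since it is `1`-Lipschitz and fixes `C`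
  refine ⟨fun s => (min (γ.extend s).1 0, min (γ.extend s).2 0), by fun_prop, ?_, ?_, ?_⟩
  · intro s hs
    simp [γ.extend_of_le_zero hs]
  · simpa [hxneg.1, hxneg.2] using hxb
  · intro s
    refine ⟨min_le_right _ _, min_le_right _ _, ?_⟩
    obtain ⟨y, hy, hys⟩ := Metric.mem_thickening_iff.1 (hγ (projIcc 0 1 zero_le_one s))
    refine (Metric.infDist_le_dist_of_mem hy).trans_lt (lt_of_le_of_lt ?_ hys)
    have hyneg := hsub hy
    simp only [mem_prod, mem_Iic] at hyneg
    have hmin : ∀ a b : ℝ, b ≤ 0 → dist (min a 0) b ≤ dist a b := fun a b hb => by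
      have := abs_min_sub_min_le_max a 0 b 0
      rw [min_eq_left hb] at this
      simpa [Real.dist_eq] using this
    rw [Prod.dist_eq, Prod.dist_eq]
    exact max_le_max (hmin _ _ hyneg.1) (hmin _ _ hyneg.2)

/-- The conclusion of `exists_mem` up to an error `ε`. In the application of Poincaré–Miranda the
coordinate `x (.inl i)` parametrizes the (prolonged) range of `t i`, with `[-1/2, 1/2]`
corresponding to `[0,1]`, and `x (.inr i)` is the parameter on the prolonged curve `Γ i`. -/
lemma exists_approx_mem {ι : Type*} [Fintype ι] {z : (ι → ℝ) → ι → ℝ × ℝ} (hz : Continuous z)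
    (hz0 : ∀ t ∈ Icc (0 : ι → ℝ) 1, ∀ i, t i = 0 → 0 ≤ (z t i).1)
    (hz1 : ∀ t ∈ Icc (0 : ι → ℝ) 1, ∀ i, t i = 1 → 0 ≤ (z t i).2)
    {C : ι → Set (ℝ × ℝ)}
    (hsub : ∀ i, C i ⊆ Iic (0 : ℝ) ×ˢ Iic (0 : ℝ))
    (hconn : ∀ i, IsConnected (C i)) (hunb : ∀ i, ¬ Bornology.IsBounded (C i))
    (h0 : ∀ i, (0 : ℝ × ℝ) ∈ C i) {ε : ℝ} (hε : 0 < ε) :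
    ∃ t ∈ Icc (0 : ι → ℝ) 1, ∀ i,
      (0 ≤ (z t i).1 ∧ 0 ≤ (z t i).2) ∨ Metric.infDist (z t i) (C i) < ε := by
  have hcube : IsCompact (Icc (0 : ι → ℝ) 1) := isCompact_Icc
  obtain ⟨b, hb⟩ := hcube.exists_bound_of_continuousOn (f := z) (by fun_prop)
  have hb1 : ∀ t ∈ Icc (0 : ι → ℝ) 1, ∀ i, |(z t i).1| ≤ b := fun t ht i =>
    (norm_fst_le (z t i)).trans ((norm_le_pi_norm _ i).trans (hb t ht))
  have hb2 : ∀ t ∈ Icc (0 : ι → ℝ) 1, ∀ i, |(z t i).2| ≤ b := fun t ht i =>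
    (norm_snd_le (z t i)).trans ((norm_le_pi_norm _ i).trans (hb t ht))
  have hb0 : 0 ≤ b := (norm_nonneg _).trans (hb 0 ⟨le_rfl, zero_le_one⟩)
  choose γ hγc hγ0 hγ1 hγ using fun i =>
    exists_path_near (hsub i) (hconn i) (hunb i) (h0 i) hε (2 * b)
  -- the curve, prolonged by the diagonal of the nonnegative quadrant
  let Γ : ι → ℝ → ℝ × ℝ := fun i s => γ i s + (b * max (-s) 0, b * max (-s) 0)
  have hΓc : ∀ i, Continuous (Γ i) := fun i => by
    have := hγc i
    fun_prop
  obtain ⟨L, hL⟩ : ∃ L, ∀ i, ∀ s ∈ Icc (-1 : ℝ) 1, |(Γ i s).1 - (Γ i s).2| ≤ L := by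
    obtain ⟨L, hL⟩ := (isCompact_Icc (a := (-1 : ℝ)) (b := 1)).exists_bound_of_continuousOn
      (f := fun s i => (Γ i s).1 - (Γ i s).2)
      (Continuous.continuousOn (continuous_pi fun i => by have := hΓc i; fun_prop))
    exact ⟨L, fun i s hs => (norm_le_pi_norm (fun i => (Γ i s).1 - (Γ i s).2) i).trans (hL s hs)⟩
  let cl : (ι ⊕ ι → ℝ) → ι → ℝ := fun x i => max 0 (min 1 (x (.inl i) + 1 / 2))
  have hclc : Continuous cl := by fun_prop
  have hclm : ∀ x, cl x ∈ Icc (0 : ι → ℝ) 1 := fun x =>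
    ⟨fun i => le_max_left _ _, fun i => max_le (by simp) (min_le_left _ _)⟩
  -- the shift of `z t i` in the direction `(1,-1)`, nonzero only outside `[-1/2, 1/2]`
  let σ : ℝ → ℝ := fun τ => (2 * b + L) * (max (-τ - 1 / 2) 0 - max (τ - 1 / 2) 0)
  let F : (ι ⊕ ι → ℝ) → (ι ⊕ ι → ℝ) := fun x => Sum.elim
    (fun i => ((z (cl x) i).1 - (z (cl x) i).2) + 2 * σ (x (.inl i)) -
      ((Γ i (x (.inr i))).1 - (Γ i (x (.inr i))).2))
    (fun i => ((Γ i (x (.inr i))).1 + (Γ i (x (.inr i))).2)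
      - ((z (cl x) i).1 + (z (cl x) i).2))
  have hF : Continuous F := by
    refine continuous_pi fun k => ?_
    rcases k with i | i
    · have := hΓc i
      simp only [F, Sum.elim_inl, σ]
      fun_prop
    · have := hΓc i
      simp only [F, Sum.elim_inr]
      fun_prop
  obtain ⟨x, hx, hFx⟩ := poincare_miranda_s6 hF
    (by
      rintro x hx (i | i) hi
      · have h1 := abs_le.1 (hb1 _ (hclm x) i)
        have h2 := abs_le.1 (hb2 _ (hclm x) i)
        have h3 := abs_le.1 (hL i (x (.inr i)) ⟨hx.1 _, hx.2 _⟩)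
        have h4 : σ (-1) = (2 * b + L) * (1 / 2) := by simp only [σ]; norm_num
        simp only [F, Sum.elim_inl, hi, h4]
        linarith
      · have h1 := abs_le.1 (hb1 _ (hclm x) i)
        have h2 := abs_le.1 (hb2 _ (hclm x) i)
        have h4 : Γ i (-1) = (b, b) := by
          simp [Γ, hγ0 i (-1) (by norm_num)]
        simp only [F, Sum.elim_inr, hi, h4]
        linarith)
    (by
      rintro x hx (i | i) hi
      · have h1 := abs_le.1 (hb1 _ (hclm x) i)
        have h2 := abs_le.1 (hb2 _ (hclm x) i)
        have h3 := abs_le.1 (hL i (x (.inr i)) ⟨hx.1 _, hx.2 _⟩)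
        have h4 : σ 1 = (2 * b + L) * (-1 / 2) := by simp only [σ]; norm_num
        simp only [F, Sum.elim_inl, hi, h4]
        linarith
      · have h1 := abs_le.1 (hb1 _ (hclm x) i)
        have h2 := abs_le.1 (hb2 _ (hclm x) i)
        have h4 : Γ i 1 = γ i 1 := by
          simp [Γ]
        have h5 := hγ1 i
        simp only [F, Sum.elim_inr, hi, h4]
        linarith)
  refine ⟨cl x, hclm x, fun i => ?_⟩
  have e1 := congrFun hFx (.inl i)
  have e2 := congrFun hFx (.inr i)
  simp only [F, Sum.elim_inl, Sum.elim_inr, Pi.zero_apply] at e1 e2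
  have hz0' := hz0 _ (hclm x) i
  have hz1' := hz1 _ (hclm x) i
  obtain ⟨hγa, hγb, hγd⟩ := hγ i (x (.inr i))
  have hL0 : 0 ≤ L := (abs_nonneg _).trans (hL i 0 (by simp))
  have hmul : ∀ r : ℝ, 0 ≤ r → 0 ≤ (2 * b + L) * r := fun r hr => by positivity
  set s := x (.inr i)
  set τ := x (.inl i) with hτ
  -- either the shift vanishes, or `cl x` lies on the face on which the matching sign is known
  have hσ : σ τ = 0 ∨ (0 ≤ σ τ ∧ 0 ≤ (z (cl x) i).1) ∨ (σ τ ≤ 0 ∧ 0 ≤ (z (cl x) i).2) := by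
    rcases le_or_gt τ (-1 / 2) with h | h
    · refine .inr (.inl ⟨?_, hz0' ?_⟩)
      · simp only [σ]
        rw [max_eq_right (a := τ - 1 / 2) (by linarith), sub_zero]
        exact hmul _ (le_max_right _ _)
      · simp only [cl]
        rw [← hτ, min_eq_right (by linarith), max_eq_left (by linarith)]
    · rcases le_or_gt (1 / 2) τ with h' | h'
      · refine .inr (.inr ⟨?_, hz1' ?_⟩)
        · simp only [σ]
          rw [max_eq_right (a := -τ - 1 / 2) (by linarith), zero_sub, mul_neg]
          exact neg_nonpos.2 (hmul _ (le_max_right _ _))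
        · simp only [cl]
          rw [← hτ, min_eq_left (by linarith), max_eq_right (by linarith)]
      · refine .inl ?_
        simp only [σ]
        rw [max_eq_right (by linarith), max_eq_right (by linarith)]
        simp
  rcases le_total s 0 with hs | hs
  · -- the crossing happens on the diagonal
    left
    have hΓ : Γ i s = (b * -s, b * -s) := by
      simp [Γ, hγ0 i s hs, max_eq_left (neg_nonneg.2 hs)]
    have hr : 0 ≤ b * -s := mul_nonneg hb0 (neg_nonneg.2 hs)
    rw [hΓ] at e1 e2
    simp only at e1 e2
    rcases hσ with h | ⟨h, h'⟩ | ⟨h, h'⟩ <;> constructor <;> linarith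
  · -- the crossing happens on `γ i`, where the signs force the shift to vanish
    right
    have hΓ : Γ i s = γ i s := by
      simp [Γ, max_eq_right (neg_nonpos.2 hs)]
    rw [hΓ] at e1 e2
    have : z (cl x) i = γ i s := by
      rcases hσ with h | ⟨h, h'⟩ | ⟨h, h'⟩ <;> ext <;> linarith
    rwa [this]

/-- A continuous map from the cube whose `i`-th plane component has nonnegative first coordinate on
the face `t i = 0` and nonnegative second coordinate on `t i = 1` attains a point all of whose
components lie in `[0,∞)²` or in `C i`. -/
lemma exists_mem {ι : Type*} [Fintype ι] {z : (ι → ℝ) → ι → ℝ × ℝ} (hz : Continuous z)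
    (hz0 : ∀ t ∈ Icc (0 : ι → ℝ) 1, ∀ i, t i = 0 → 0 ≤ (z t i).1)
    (hz1 : ∀ t ∈ Icc (0 : ι → ℝ) 1, ∀ i, t i = 1 → 0 ≤ (z t i).2)
    {C : ι → Set (ℝ × ℝ)}
    (hsub : ∀ i, C i ⊆ Iic (0 : ℝ) ×ˢ Iic (0 : ℝ)) (hcl : ∀ i, IsClosed (C i))
    (hconn : ∀ i, IsConnected (C i)) (hunb : ∀ i, ¬ Bornology.IsBounded (C i))
    (h0 : ∀ i, (0 : ℝ × ℝ) ∈ C i) :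
    ∃ t ∈ Icc (0 : ι → ℝ) 1, ∀ i, (0 ≤ (z t i).1 ∧ 0 ≤ (z t i).2) ∨ z t i ∈ C i := by
  let K : ι → Set (ℝ × ℝ) := fun i => Ici 0 ∪ C i
  have hK : ∀ i, IsClosed (K i) := fun i => isClosed_Ici.union (hcl i)
  have hKne : ∀ i, (K i).Nonempty := fun i => ⟨0, .inr (h0 i)⟩
  obtain ⟨t, ht, hmin⟩ := (isCompact_Icc (a := (0 : ι → ℝ)) (b := 1)).exists_isMinOn
    ⟨0, le_rfl, zero_le_one⟩ (f := fun t => ∑ i, Metric.infDist (z t i) (K i))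
    (Continuous.continuousOn (continuous_finsetSum _ fun i _ =>
      (Metric.continuous_infDist_pt _).comp (by fun_prop)))
  have hsum : ∑ i, Metric.infDist (z t i) (K i) ≤ 0 := by
    refine le_of_forall_pos_le_add fun ε hε => ?_
    obtain ⟨u, hu, huε⟩ := exists_approx_mem hz hz0 hz1 hsub hconn hunb h0
      (ε := ε / (Fintype.card ι + 1)) (by positivity)
    have h1 : ∀ i, Metric.infDist (z u i) (K i) ≤ ε / (Fintype.card ι + 1) := fun i => by
      rcases huε i with h | h
      · rw [Metric.infDist_zero_of_mem (.inl ⟨h.1, h.2⟩)]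
        positivity
      · exact (Metric.infDist_le_infDist_of_subset subset_union_right ⟨0, h0 i⟩).trans h.le
    calc ∑ i, Metric.infDist (z t i) (K i) ≤ ∑ i, Metric.infDist (z u i) (K i) := hmin hu
      _ ≤ ∑ i : ι, ε / (Fintype.card ι + 1) := Finset.sum_le_sum fun i _ => h1 i
      _ ≤ 0 + ε := by
        rw [Finset.sum_const, Finset.card_univ, nsmul_eq_mul, zero_add, mul_div_assoc',
          div_le_iff₀ (by positivity)]
        linarith
  refine ⟨t, ht, fun i => ?_⟩
  have hi : Metric.infDist (z t i) (K i) = 0 :=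
    le_antisymm ((Finset.single_le_sum (f := fun i => Metric.infDist (z t i) (K i))
      (fun _ _ => Metric.infDist_nonneg) (Finset.mem_univ i)).trans hsum) Metric.infDist_nonneg
  rcases ((hK i).mem_iff_infDist_zero (hKne i)).2 hi with h | h
  · exact .inl ⟨h.1, h.2⟩
  · exact .inr h

/-- given points (μ^α, ν^α) ∈ A^α for every α ∈ {0,1}^p and
closed connected unbounded sets C_i ⊆ (−∞,0]×(−∞,0] containing 0, some convex
combination (μ̄, ν̄) of the points satisfies, for every i ∈ J, either
(μ̄_i ≥ 0 and ν̄_i ≥ 0) or (μ̄_i, ν̄_i) ∈ C_i. -/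
theorem convex_combination_in_CSet {p : ℕ} (J : Set (Fin p))
    (C : Fin p → Set (ℝ × ℝ))
    (hCsub : ∀ i, C i ⊆ Set.Iic (0:ℝ) ×ˢ Set.Iic (0:ℝ))
    (hCclosed : ∀ i, IsClosed (C i))
    (hCconn : ∀ i, IsConnected (C i))
    (hCunbdd : ∀ i, ¬ Bornology.IsBounded (C i))
    (hC0 : ∀ i, (0:ℝ × ℝ) ∈ C i)
    (w : (Fin p → ℝ) → (Fin p → ℝ) × (Fin p → ℝ))
    (hw : ∀ α : Fin p → ℝ, IsBinaryVec α → w α ∈ Aset J α) :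
    ∃ z ∈ convexHull ℝ (w '' {α : Fin p → ℝ | IsBinaryVec α}),
      ∀ i ∈ J, (0 ≤ z.1 i ∧ 0 ≤ z.2 i) ∨ (z.1 i, z.2 i) ∈ C i := by
  classical
  let e : Finset (Fin p) → Fin p → ℝ := fun S i => if i ∈ S then 1 else 0
  have he : ∀ S, IsBinaryVec (e S) := fun S i => by
    by_cases h : i ∈ S <;> simp [e, h]
  -- multilinear interpolation of the vertex values `w (e S)` on the cube
  let c : Finset (Fin p) → (Fin p → ℝ) → ℝ := fun S t =>
    (∏ i ∈ S, t i) * ∏ i ∈ Finset.univ \ S, (1 - t i)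
  have hcc : ∀ S, Continuous (c S) := fun S => by fun_prop
  have hcnn : ∀ S, ∀ t ∈ Icc (0 : Fin p → ℝ) 1, 0 ≤ c S t := fun S t ht =>
    mul_nonneg (Finset.prod_nonneg fun i _ => ht.1 i)
      (Finset.prod_nonneg fun i _ => sub_nonneg.2 (ht.2 i))
  have hcsum : ∀ t, ∑ S, c S t = 1 := fun t => by
    have := Finset.prod_add t (fun i => 1 - t i) Finset.univ
    simp only [add_sub_cancel, Finset.prod_const_one, Finset.powerset_univ] at this
    exact this.symm
  have hc0 : ∀ S t i, t i = 0 → i ∈ S → c S t = 0 := fun S t i hti hi =>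
    mul_eq_zero_of_left (Finset.prod_eq_zero hi hti) _
  have hc1 : ∀ S t i, t i = 1 → i ∉ S → c S t = 0 := fun S t i hti hi =>
    mul_eq_zero_of_right _ (Finset.prod_eq_zero (i := i) (by simpa using hi) (by simp [hti]))
  let Z : (Fin p → ℝ) → (Fin p → ℝ) × (Fin p → ℝ) := fun t => ∑ S, c S t • w (e S)
  have hZ1 : ∀ t i, (Z t).1 i = ∑ S, c S t * (w (e S)).1 i := fun t i => by
    simp [Z, Prod.fst_sum]
  have hZ2 : ∀ t i, (Z t).2 i = ∑ S, c S t * (w (e S)).2 i := fun t i => by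
    simp [Z, Prod.snd_sum]
  have hZc : Continuous Z := by fun_prop
  obtain ⟨t, ht, hmem⟩ := exists_mem
    (z := fun t i => if i ∈ J then ((Z t).1 i, (Z t).2 i) else 0)
    (continuous_pi fun i => by split_ifs <;> fun_prop)
    (fun t ht i hti => by
      split_ifs with hi
      · simp only [hZ1]
        refine Finset.sum_nonneg fun S _ => ?_
        by_cases hS : i ∈ S
        · simp [hc0 S t i hti hS]
        · exact mul_nonneg (hcnn S t ht) ((hw _ (he S)).1 i hi (by simp [e, hS]))
      · simp)
    (fun t ht i hti => by
      split_ifs with hi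
      · simp only [hZ2]
        refine Finset.sum_nonneg fun S _ => ?_
        by_cases hS : i ∈ S
        · exact mul_nonneg (hcnn S t ht) ((hw _ (he S)).2 i hi (by simp [e, hS]))
        · simp [hc1 S t i hti hS]
      · simp)
    hCsub hCclosed hCconn hCunbdd hC0
  refine ⟨Z t, ?_, fun i hi => by simpa [hi] using hmem i⟩
  exact (convex_convexHull ℝ _).sum_mem (fun S _ => hcnn S t ht) (hcsum t)
    fun S _ => subset_convexHull ℝ _ ⟨e S, he S, rfl⟩
end
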